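/- arXiv:1510.02999 — 3 statements merged into one kernel-verified Lean document; each statement's English description precedes it below -/
import Mathlib

section
/- Let T > 0 and let v : [0,T]×ℝ³ → ℝ³, G : [0,T]×ℝ³ → M₃(ℝ), p : [0,T]×ℝ³ → ℝ, f : [0,T]×ℝ³ → ℝ³, g : [0,T]×ℝ³ → M₃(ℝ) be smooth functions, all compactly supported in the spatial variable uniformly in t, satisfying for all (t,x): ∂_t v_i − ∂_j G_{ij} = −∂_i p + f_i and ∂_t G_{ij} − ∂_j v_i = g_{ij} (summation over repeated indices). Define the ghost-weighted energy ℰ(t) = ∫_{ℝ³} e^{−q(t−r)} (|v(t,x)|² + ‖G(t,x)‖_F²) dx, where q(σ) = arctan σ. Then for every t ∈ (0,T), ℰ is differentiable at t and ℰ′(t) + ∫_{ℝ³} e^{−q(t−r)}/(1+(t−r)²) ( |v + Gω|² + ‖G − (Gω)ωᵀ‖_F² ) dx = 2∫_{ℝ³} e^{−q(t−r)} ( f·v + Σ_{i,j} g_{ij} G_{ij} ) dx − 2∫_{ℝ³} e^{−q(t−r)} v·∇p dx. -/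
open MeasureTheory

noncomputable section

/-- Three-dimensional Euclidean space. -/
abbrev E3 : Type := EuclideanSpace ℝ (Fin 3)

/-- The spatial partial derivative `∂_j u` of a scalar function on `ℝ³`. -/
noncomputable def pd (j : Fin 3) (u : E3 → ℝ) (x : E3) : ℝ :=
  fderiv ℝ u x (EuclideanSpace.single j 1)

/-- The ghost weight `q(σ) = arctan σ`, so that `q′(σ) = 1/(1+σ²)` and `|q| ≤ π/2`. -/
noncomputable def ghost (σ : ℝ) : ℝ := Real.arctan σ

/-- The ghost-weighted energy
`ℰ(t) = ∫ e^{−q(t−r)} (|v(t,x)|² + ‖G(t,x)‖_F²) dx`. -/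
noncomputable def ghostEnergy (v : ℝ → E3 → Fin 3 → ℝ)
    (G : ℝ → E3 → Fin 3 → Fin 3 → ℝ) (t : ℝ) : ℝ :=
  ∫ x : E3, Real.exp (-(ghost (t - ‖x‖))) *
    ((∑ i, (v t x i) ^ 2) + ∑ i, ∑ j, (G t x i j) ^ 2)

/-!
The energy density `e = |v|² + ‖G‖_F²` obeys the local law `∂_t e = 2 (P + div (vᵀG))`, where `P`
is the power of the right-hand sides of the system. The weight `w = e^{-q(t-r)}` satisfies
`∂_t w = -q'(t-r) w` and `∇w = q'(t-r) w ω`, so differentiating `∫ w e` and integrating the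
divergence by parts produces the loss `∫ q'(t-r) w (e + 2 ω · vᵀG)`. Since `|ω| = 1`, completing the
square turns `e + 2 ω · vᵀG` into `|v + Gω|² + ‖G - (Gω)ωᵀ‖_F²`.

The weight is not differentiable at the origin but it is locally Lipschitz, so the integration by
parts is the one for Lipschitz functions, applied to a globally Lipschitz function that agrees with
the weight near the support.
-/

open Filter Topology

variable {E : Type*} [NormedAddCommGroup E]

section LocallyLipschitz

lemma exists_lipschitzWith_forall_eventuallyEq {X : Type*} [PseudoMetricSpace X]
    [WeaklyLocallyCompactSpace X] {f : X → ℝ} (hf : LocallyLipschitz f) {K : Set X}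
    (hK : IsCompact K) : ∃ C g, LipschitzWith C g ∧ ∀ x ∈ K, g =ᶠ[𝓝 x] f := by
  obtain ⟨L, hL, hKL⟩ := exists_compact_superset hK
  obtain ⟨C, hC⟩ := hf.locallyLipschitzOn.exists_lipschitzOnWith_of_compact hL
  obtain ⟨g, hg, hfg⟩ := hC.extend_real
  exact ⟨C, g, hg, fun x hx =>
    (hfg.eventuallyEq_of_mem (mem_interior_iff_mem_nhds.1 (hKL hx))).symm⟩

variable [NormedSpace ℝ E] [FiniteDimensional ℝ E]

lemma exists_lipschitzWith_lineDeriv_mul_eq {f u : E → ℝ} (hf : LocallyLipschitz f)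
    (hu : HasCompactSupport u) (e : E) :
    ∃ C g, LipschitzWith C g ∧ (∀ x ∈ tsupport u, g x = f x) ∧
      ∀ x, lineDeriv ℝ g x e * u x = lineDeriv ℝ f x e * u x := by
  have : ProperSpace E := FiniteDimensional.proper_real E
  obtain ⟨C, g, hg, hgf⟩ := exists_lipschitzWith_forall_eventuallyEq hf hu
  refine ⟨C, g, hg, fun x hx => (hgf x hx).eq_of_nhds, fun x => ?_⟩
  by_cases hx : x ∈ tsupport u
  · rw [(hgf x hx).lineDeriv_eq]
  · simp only [image_eq_zero_of_notMem_tsupport hx, mul_zero]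

variable [MeasurableSpace E] [BorelSpace E] {μ : Measure E}

lemma integrable_lineDeriv_mul [IsFiniteMeasureOnCompacts μ] {f u : E → ℝ}
    (hf : LocallyLipschitz f) (hu : Continuous u) (hu' : HasCompactSupport u) (e : E) :
    Integrable (fun x => lineDeriv ℝ f x e * u x) μ := by
  obtain ⟨C, g, hg, -, hgf⟩ := exists_lipschitzWith_lineDeriv_mul_eq hf hu' e
  simp only [← hgf]
  exact (hu.integrable_of_hasCompactSupport hu').mul_of_top_right (hg.memLp_lineDeriv e)

lemma integral_lineDeriv_mul_eq_neg [μ.IsAddHaarMeasure] {f u : E → ℝ}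
    (hf : LocallyLipschitz f) (hu : ContDiff ℝ 1 u) (hu' : HasCompactSupport u) (e : E) :
    ∫ x, lineDeriv ℝ f x e * u x ∂μ = -∫ x, f x * fderiv ℝ u x e ∂μ := by
  obtain ⟨C, g, hg, hgf, hgf'⟩ := exists_lipschitzWith_lineDeriv_mul_eq hf hu' e
  obtain ⟨D, hD⟩ := hu.lipschitzWith_of_hasCompactSupport hu' one_ne_zero
  have lineDeriv_mul (x : E) : lineDeriv ℝ u x (-e) * g x = -(f x * fderiv ℝ u x e) := by
    rw [(hu.differentiable one_ne_zero x).lineDeriv_eq_fderiv, map_neg]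
    by_cases hx : x ∈ tsupport u
    · rw [hgf x hx]
      ring
    · simp [fderiv_of_notMem_tsupport ℝ hx]
  simp only [← hgf', hg.integral_lineDeriv_mul_eq hD hu', lineDeriv_mul, integral_neg]

end LocallyLipschitz

section Radial

variable [InnerProductSpace ℝ E]

lemma hasFDerivAt_comp_norm {φ : ℝ → ℝ} {φ' : ℝ} {x : E} (hφ : HasDerivAt φ φ' ‖x‖) (hx : x ≠ 0) :
    HasFDerivAt (fun y => φ ‖y‖) ((φ' / ‖x‖) • innerSL ℝ x) x := by
  have hnorm : HasFDerivAt (fun y : E => ‖y‖) (‖x‖⁻¹ • innerSL ℝ x) x := by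
    have h := (hasStrictFDerivAt_norm_sq x).hasFDerivAt.sqrt (by simpa using hx)
    simp only [Real.sqrt_sq (norm_nonneg _)] at h
    convert! h using 1
    ext y
    simp only [_root_.smul_apply, smul_eq_mul, nsmul_eq_mul, Nat.cast_ofNat]
    field_simp
  rw [div_eq_mul_inv, ← smul_smul]
  exact hφ.comp_hasFDerivAt x hnorm

lemma lineDeriv_comp_norm_ae_eq [MeasurableSpace E] {μ : Measure E} [NullSingletonClass μ]
    {φ : ℝ → ℝ} (hφ : Differentiable ℝ φ) (e : E) :
    (fun x => lineDeriv ℝ (fun y => φ ‖y‖) x e) =ᵐ[μ]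
      fun x => deriv φ ‖x‖ * (inner ℝ x e / ‖x‖) := by
  filter_upwards [Measure.ae_ne μ 0] with x hx
  rw [((hasFDerivAt_comp_norm (hφ ‖x‖).hasDerivAt hx).hasLineDerivAt e).lineDeriv]
  simp only [_root_.smul_apply, innerSL_apply_apply, smul_eq_mul]
  ring

end Radial

section ParametricIntegral

variable {X V : Type*} [TopologicalSpace X] [T2Space X] [MeasurableSpace X] [BorelSpace X]
  {μ : Measure X} [IsFiniteMeasureOnCompacts μ] [NormedAddCommGroup V] {K : Set X}

lemma integrable_of_forall_notMem_eq_zero {F : X → V} (hF : Continuous F)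
    (hK : IsCompact K) (hFK : ∀ x ∉ K, F x = 0) : Integrable F μ :=
  hF.integrable_of_hasCompactSupport (HasCompactSupport.intro hK hFK)

variable [NormedSpace ℝ V]

theorem hasDerivAt_integral_of_isCompact {F F' : ℝ → X → V} (hF : ∀ s, Continuous (F s))
    (hF' : Continuous fun z : ℝ × X => F' z.1 z.2)
    (hFF' : ∀ s x, HasDerivAt (fun s => F s x) (F' s x) s)
    (hK : IsCompact K) (hFK : ∀ s, ∀ x ∉ K, F s x = 0) (t : ℝ) :
    HasDerivAt (fun s => ∫ x, F s x ∂μ) (∫ x, F' t x ∂μ) t := by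
  have hF'K (s : ℝ) (x : X) (hx : x ∉ K) : F' s x = 0 := by
    have hzero : (fun s => F s x) = fun _ => 0 := funext fun s => hFK s x hx
    exact (hFF' s x).unique (hzero ▸ hasDerivAt_const s 0)
  obtain ⟨M, hM⟩ := ((isCompact_Icc (a := t - 1) (b := t + 1)).prod hK).exists_bound_of_continuousOn
    hF'.continuousOn
  have hbound (x : X) : ∀ s ∈ Set.Icc (t - 1) (t + 1), ‖F' s x‖ ≤ K.indicator (fun _ => M) x := by
    intro s hs
    by_cases hx : x ∈ K
    · simpa only [Set.indicator_of_mem hx] using hM (s, x) ⟨hs, hx⟩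
    · simp only [Set.indicator_of_notMem hx, hF'K s x hx, norm_zero, le_refl]
  have hint (s : ℝ) : Integrable (F s) μ :=
    integrable_of_forall_notMem_eq_zero (hF s) hK (hFK s)
  have hint' : Integrable (F' t) μ :=
    integrable_of_forall_notMem_eq_zero (hF'.comp (Continuous.prodMk_right t)) hK (hF'K t)
  exact (hasDerivAt_integral_of_dominated_loc_of_deriv_le
    (Icc_mem_nhds (by linarith) (by linarith))
    (.of_forall fun s => (hint s).aestronglyMeasurable) (hint t) hint'.aestronglyMeasurable
    (.of_forall hbound)
    ((integrable_indicator_iff hK.measurableSet).2 (integrableOn_const hK.measure_lt_top.ne))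
    (.of_forall fun x s _ => hFF' s x)).2

end ParametricIntegral

section TimeDerivative

variable [NormedSpace ℝ E] {V : Type*} [NormedAddCommGroup V] [NormedSpace ℝ V] {h : ℝ × E → V}

lemma hasDerivAt_time (hh : ContDiff ℝ 1 h) (t : ℝ) (x : E) :
    HasDerivAt (fun s => h (s, x)) (deriv (fun s => h (s, x)) t) t :=
  ((hh.comp (contDiff_prodMk_left x)).differentiable one_ne_zero t).hasDerivAt

lemma continuous_deriv_time (hh : ContDiff ℝ 1 h) :
    Continuous fun z : ℝ × E => deriv (fun s => h (s, z.2)) z.1 := by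
  have deriv_eq (z : ℝ × E) : deriv (fun s => h (s, z.2)) z.1 = fderiv ℝ h z (1, 0) := by
    have hpath : HasDerivAt (fun s : ℝ => (s, z.2)) (1, 0) z.1 :=
      (hasDerivAt_id z.1).prodMk (hasDerivAt_const z.1 z.2)
    exact ((hh.differentiable one_ne_zero z).hasFDerivAt.comp_hasDerivAt z.1 hpath).deriv
  simp only [deriv_eq]
  exact (hh.continuous_fderiv one_ne_zero).clm_apply continuous_const

end TimeDerivative

section GhostWeight

/-- The space-time weight `e^{-q(t-r)}` with profile `q`. -/
def ghostWeight (q : ℝ → ℝ) (t : ℝ) (x : E) : ℝ :=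
  Real.exp (-q (t - ‖x‖))

variable {q : ℝ → ℝ}

lemma continuous_ghostWeight (hq : Continuous q) :
    Continuous fun z : ℝ × E => ghostWeight q z.1 z.2 := by
  unfold ghostWeight
  fun_prop

lemma continuous_ghostWeight_right (hq : Continuous q) (t : ℝ) :
    Continuous (ghostWeight q t : E → ℝ) :=
  (continuous_ghostWeight hq).comp (Continuous.prodMk_right t)

lemma hasDerivAt_ghostWeight (hq : Differentiable ℝ q) (t : ℝ) (x : E) :
    HasDerivAt (fun s => ghostWeight q s x) (-(deriv q (t - ‖x‖) * ghostWeight q t x)) t := by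
  convert! ((hq (t - ‖x‖)).hasDerivAt.comp_sub_const t ‖x‖).neg.exp using 1
  simp only [ghostWeight, Pi.neg_apply]
  ring

lemma locallyLipschitz_ghostWeight (hq : ContDiff ℝ 1 q) (t : ℝ) :
    LocallyLipschitz (ghostWeight q t : E → ℝ) :=
  (Real.contDiff_exp.comp (hq.comp (contDiff_const.sub contDiff_id)).neg).locallyLipschitz.comp
    lipschitzWith_one_norm.locallyLipschitz

lemma lineDeriv_ghostWeight_ae_eq [InnerProductSpace ℝ E] [MeasurableSpace E] {μ : Measure E}
    [NullSingletonClass μ] (hq : Differentiable ℝ q) (t : ℝ) (e : E) :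
    (fun x => lineDeriv ℝ (ghostWeight q t) x e) =ᵐ[μ]
      fun x => deriv q (t - ‖x‖) * ghostWeight q t x * (inner ℝ x e / ‖x‖) := by
  have hφ (r : ℝ) : HasDerivAt (fun r => Real.exp (-q (t - r)))
      (deriv q (t - r) * Real.exp (-q (t - r))) r := by
    convert! ((hq (t - r)).hasDerivAt.comp_const_sub t r).neg.exp using 1
    simp only [Pi.neg_apply]
    ring
  filter_upwards [lineDeriv_comp_norm_ae_eq (fun r => (hφ r).differentiableAt) e] with x hx
  rw [(hφ ‖x‖).deriv] at hx
  exact hx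

lemma hasDerivAt_integral_ghostWeight_mul [NormedSpace ℝ E] [MeasurableSpace E] [BorelSpace E]
    {μ : Measure E} [IsFiniteMeasureOnCompacts μ] (hq : ContDiff ℝ 1 q) {h : ℝ × E → ℝ}
    (hh : ContDiff ℝ 1 h) {K : Set E} (hK : IsCompact K) (hhK : ∀ s, ∀ x ∉ K, h (s, x) = 0)
    (t : ℝ) :
    HasDerivAt (fun s => ∫ x, ghostWeight q s x * h (s, x) ∂μ)
      (∫ x, (ghostWeight q t x * deriv (fun s => h (s, x)) t
        - deriv q (t - ‖x‖) * ghostWeight q t x * h (t, x)) ∂μ) t := by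
  have hw := continuous_ghostWeight (E := E) hq.continuous
  have : Continuous (deriv q) := hq.continuous_deriv le_rfl
  have hh_time := continuous_deriv_time hh
  refine hasDerivAt_integral_of_isCompact (F := fun s x => ghostWeight q s x * h (s, x))
    (F' := fun s x => ghostWeight q s x * deriv (fun s => h (s, x)) s
      - deriv q (s - ‖x‖) * ghostWeight q s x * h (s, x))
    (fun s => (hw.mul hh.continuous).comp (Continuous.prodMk_right s))
    (by fun_prop) (fun s x => ?_) hK (fun s x hx => by rw [hhK s x hx, mul_zero]) t
  refine ((hasDerivAt_ghostWeight (hq.differentiable one_ne_zero) s x).mul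
    (hasDerivAt_time hh s x)).congr_deriv ?_
  ring

end GhostWeight

section Coordinates

variable {ι κ : Type*} [Fintype ι] [Fintype κ]

/-- The partial derivative `∂_j u` of a scalar function on `ℝ^ι`. -/
def partialDeriv [DecidableEq ι] (j : ι) (u : EuclideanSpace ℝ ι → ℝ) (x : EuclideanSpace ℝ ι) :
    ℝ :=
  fderiv ℝ u x (EuclideanSpace.single j 1)

/-- The energy density `|v|² + ‖G‖_F²`. -/
def energyDensity (v : κ → ℝ) (G : κ → ι → ℝ) : ℝ :=
  (∑ i, v i ^ 2) + ∑ i, ∑ j, G i j ^ 2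

/-- The energy flux `vᵀG`, normalised without its factor `-2`. -/
def energyFlux (v : κ → ℝ) (G : κ → ι → ℝ) (j : ι) : ℝ :=
  ∑ i, v i * G i j

/-- The density `|v + Gω|² + ‖G - (Gω)ωᵀ‖_F²` of the good unknowns in the direction `ω`. -/
def goodDensity (v : κ → ℝ) (G : κ → ι → ℝ) (ω : ι → ℝ) : ℝ :=
  (∑ i, (v i + ∑ j, G i j * ω j) ^ 2) + ∑ i, ∑ j, (G i j - (∑ l, G i l * ω l) * ω j) ^ 2

lemma sum_sq_sub_projection (X ω : ι → ℝ) (hω : ω = 0 ∨ ∑ j, ω j ^ 2 = 1) :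
    ∑ j, (X j - (∑ l, X l * ω l) * ω j) ^ 2 = ∑ j, X j ^ 2 - (∑ l, X l * ω l) ^ 2 := by
  rcases hω with rfl | hω
  · simp
  set s := ∑ l, X l * ω l with hs
  calc ∑ j, (X j - s * ω j) ^ 2
      = ∑ j, X j ^ 2 - 2 * s * (∑ j, X j * ω j) + s ^ 2 * ∑ j, ω j ^ 2 := by
        simp only [Finset.mul_sum, ← Finset.sum_sub_distrib, ← Finset.sum_add_distrib]
        exact Finset.sum_congr rfl fun j _ => by ring
    _ = ∑ j, X j ^ 2 - s ^ 2 := by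
        rw [hω, ← hs]
        ring

lemma goodDensity_eq (v : κ → ℝ) (G : κ → ι → ℝ) {ω : ι → ℝ} (hω : ω = 0 ∨ ∑ j, ω j ^ 2 = 1) :
    goodDensity v G ω = energyDensity v G + 2 * ∑ j, ω j * energyFlux v G j := by
  have cross : ∑ j, ω j * energyFlux v G j = ∑ i, v i * ∑ j, G i j * ω j := by
    simp only [energyFlux, Finset.mul_sum]
    rw [Finset.sum_comm]
    exact Finset.sum_congr rfl fun i _ => Finset.sum_congr rfl fun j _ => by ring
  rw [cross]
  simp only [goodDensity, energyDensity, sum_sq_sub_projection _ _ hω,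
    Finset.mul_sum (s := Finset.univ) (a := (2 : ℝ)), ← Finset.sum_add_distrib]
  exact Finset.sum_congr rfl fun i _ => by ring

/- At the origin `x j / ‖x‖` is the junk value `0`. -/
lemma div_norm_eq_zero_or_sum_sq_eq_one (x : EuclideanSpace ℝ ι) :
    (fun j => x j / ‖x‖) = 0 ∨ ∑ j, (x j / ‖x‖) ^ 2 = 1 := by
  rcases eq_or_ne x 0 with rfl | hx
  · left
    ext j
    simp
  · right
    have hnorm : ‖x‖ ^ 2 ≠ 0 := pow_ne_zero 2 (norm_ne_zero_iff.2 hx)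
    simp only [div_pow, ← Finset.sum_div, ← EuclideanSpace.real_norm_sq_eq, div_self hnorm]

section PartialDeriv

variable {u : EuclideanSpace ℝ ι → ℝ} {q : ℝ → ℝ}

lemma lineDeriv_ghostWeight_single_ae_eq [DecidableEq ι] (hq : Differentiable ℝ q) (t : ℝ)
    (j : ι) :
    (fun x : EuclideanSpace ℝ ι => lineDeriv ℝ (ghostWeight q t) x (EuclideanSpace.single j 1))
      =ᵐ[volume] fun x => deriv q (t - ‖x‖) * ghostWeight q t x * (x j / ‖x‖) := by
  have : Nonempty ι := ⟨j⟩
  simpa [EuclideanSpace.inner_single_right] using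
    lineDeriv_ghostWeight_ae_eq (μ := volume) hq t (EuclideanSpace.single j (1 : ℝ))

lemma integrable_deriv_mul_ghostWeight_mul (hq : ContDiff ℝ 1 q) (hu : Continuous u)
    (hu' : HasCompactSupport u) (t : ℝ) (j : ι) :
    Integrable fun x => deriv q (t - ‖x‖) * ghostWeight q t x * (x j / ‖x‖ * u x) := by
  classical
  refine (integrable_lineDeriv_mul (locallyLipschitz_ghostWeight hq t) hu hu'
    (EuclideanSpace.single j 1)).congr ?_
  filter_upwards [lineDeriv_ghostWeight_single_ae_eq (hq.differentiable one_ne_zero) t j] with x hx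
  rw [hx, mul_assoc]

variable [DecidableEq ι]

lemma continuous_partialDeriv (hu : ContDiff ℝ 1 u) (j : ι) : Continuous (partialDeriv j u) :=
  (hu.continuous_fderiv one_ne_zero).clm_apply continuous_const

lemma partialDeriv_sum_mul {a b : κ → EuclideanSpace ℝ ι → ℝ} (ha : ∀ i, ContDiff ℝ 1 (a i))
    (hb : ∀ i, ContDiff ℝ 1 (b i)) (j : ι) (x : EuclideanSpace ℝ ι) :
    partialDeriv j (fun y => ∑ i, a i y * b i y) x
      = ∑ i, (a i x * partialDeriv j (b i) x + b i x * partialDeriv j (a i) x) := by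
  have ha' (i : κ) : DifferentiableAt ℝ (a i) x := (ha i).differentiable one_ne_zero x
  have hb' (i : κ) : DifferentiableAt ℝ (b i) x := (hb i).differentiable one_ne_zero x
  simp [partialDeriv, fderiv_fun_sum fun i _ => (ha' i).fun_mul (hb' i),
    fderiv_fun_mul (ha' _) (hb' _)]

lemma integrable_ghostWeight_mul_partialDeriv (hq : Continuous q) (hu : ContDiff ℝ 1 u)
    (hu' : HasCompactSupport u) (t : ℝ) (j : ι) :
    Integrable fun x => ghostWeight q t x * partialDeriv j u x :=
  Continuous.integrable_of_hasCompactSupport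
    ((continuous_ghostWeight_right hq t).mul (continuous_partialDeriv hu j))
    (HasCompactSupport.mul_left (f := ghostWeight q t) (hu'.fderiv_apply ℝ _))

lemma integral_ghostWeight_mul_partialDeriv (hq : ContDiff ℝ 1 q) (hu : ContDiff ℝ 1 u)
    (hu' : HasCompactSupport u) (t : ℝ) (j : ι) :
    ∫ x, ghostWeight q t x * partialDeriv j u x
      = -∫ x, deriv q (t - ‖x‖) * ghostWeight q t x * (x j / ‖x‖ * u x) := by
  rw [← neg_eq_iff_eq_neg]
  refine (integral_lineDeriv_mul_eq_neg (locallyLipschitz_ghostWeight hq t) hu hu'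
    (EuclideanSpace.single j 1)).symm.trans (integral_congr_ae ?_)
  filter_upwards [lineDeriv_ghostWeight_single_ae_eq (hq.differentiable one_ne_zero) t j] with x hx
  rw [hx, mul_assoc]

end PartialDeriv

section Divergence

variable {X : EuclideanSpace ℝ ι → ι → ℝ} {q : ℝ → ℝ}

lemma integrable_deriv_mul_ghostWeight_mul_sum (hq : ContDiff ℝ 1 q)
    (hX : ∀ j, Continuous fun x => X x j) (hX' : ∀ j, HasCompactSupport fun x => X x j) (t : ℝ) :
    Integrable fun x => deriv q (t - ‖x‖) * ghostWeight q t x * ∑ j, x j / ‖x‖ * X x j := by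
  simp only [Finset.mul_sum]
  exact integrable_finsetSum _ fun j _ =>
    integrable_deriv_mul_ghostWeight_mul hq (hX j) (hX' j) t j

variable [DecidableEq ι]

/-- The divergence `∑_j ∂_j X_j` of a vector field on `ℝ^ι`. -/
def divergence (X : EuclideanSpace ℝ ι → ι → ℝ) (x : EuclideanSpace ℝ ι) : ℝ :=
  ∑ j, partialDeriv j (fun y => X y j) x

lemma continuous_divergence (hX : ∀ j, ContDiff ℝ 1 fun x => X x j) : Continuous (divergence X) :=
  continuous_finsetSum _ fun j _ => continuous_partialDeriv (hX j) j

lemma integrable_ghostWeight_mul_divergence (hq : Continuous q)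
    (hX : ∀ j, ContDiff ℝ 1 fun x => X x j) (hX' : ∀ j, HasCompactSupport fun x => X x j) (t : ℝ) :
    Integrable fun x => ghostWeight q t x * divergence X x := by
  simp only [divergence, Finset.mul_sum]
  exact integrable_finsetSum _ fun j _ =>
    integrable_ghostWeight_mul_partialDeriv hq (hX j) (hX' j) t j

theorem integral_ghostWeight_mul_divergence (hq : ContDiff ℝ 1 q)
    (hX : ∀ j, ContDiff ℝ 1 fun x => X x j) (hX' : ∀ j, HasCompactSupport fun x => X x j) (t : ℝ) :
    ∫ x, ghostWeight q t x * divergence X x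
      = -∫ x, deriv q (t - ‖x‖) * ghostWeight q t x * ∑ j, x j / ‖x‖ * X x j := by
  simp only [divergence, Finset.mul_sum]
  rw [integral_finsetSum _ fun j _ =>
      integrable_ghostWeight_mul_partialDeriv hq.continuous (hX j) (hX' j) t j,
    integral_finsetSum _ fun j _ =>
      integrable_deriv_mul_ghostWeight_mul hq (hX j).continuous (hX' j) t j,
    ← Finset.sum_neg_distrib]
  exact Finset.sum_congr rfl fun j _ => integral_ghostWeight_mul_partialDeriv hq (hX j) (hX' j) t j

end Divergence

section GoodDensity

variable {q : ℝ → ℝ} {V : EuclideanSpace ℝ ι → κ → ℝ} {A : EuclideanSpace ℝ ι → κ → ι → ℝ}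
  {K : Set (EuclideanSpace ℝ ι)}

lemma contDiff_energyFlux {n : WithTop ℕ∞} (hV : ∀ i, ContDiff ℝ n fun x => V x i)
    (hA : ∀ i j, ContDiff ℝ n fun x => A x i j) (j : ι) :
    ContDiff ℝ n fun x => energyFlux (V x) (A x) j :=
  ContDiff.sum fun i _ => (hV i).mul (hA i j)

lemma integrable_deriv_mul_ghostWeight_mul_energyDensity (hq : ContDiff ℝ 1 q)
    (hV : ∀ i, Continuous fun x => V x i) (hA : ∀ i j, Continuous fun x => A x i j)
    (hK : IsCompact K) (hVK : ∀ x ∉ K, V x = 0) (hAK : ∀ x ∉ K, A x = 0) (t : ℝ) :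
    Integrable fun x => deriv q (t - ‖x‖) * ghostWeight q t x * energyDensity (V x) (A x) := by
  have : Continuous (deriv q) := hq.continuous_deriv le_rfl
  have hw := continuous_ghostWeight_right (E := EuclideanSpace ℝ ι) hq.continuous t
  refine integrable_of_forall_notMem_eq_zero ?_ hK fun x hx => ?_
  · unfold energyDensity
    fun_prop
  · simp [energyDensity, hVK x hx, hAK x hx]

lemma integral_deriv_mul_ghostWeight_mul_goodDensity (hq : ContDiff ℝ 1 q)
    (hV : ∀ i, Continuous fun x => V x i) (hA : ∀ i j, Continuous fun x => A x i j)
    (hK : IsCompact K) (hVK : ∀ x ∉ K, V x = 0) (hAK : ∀ x ∉ K, A x = 0) (t : ℝ) :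
    ∫ x, deriv q (t - ‖x‖) * ghostWeight q t x *
        goodDensity (V x) (A x) (fun j => x j / ‖x‖)
      = (∫ x, deriv q (t - ‖x‖) * ghostWeight q t x * energyDensity (V x) (A x))
        + 2 * ∫ x, deriv q (t - ‖x‖) * ghostWeight q t x *
            ∑ j, x j / ‖x‖ * energyFlux (V x) (A x) j := by
  have flux_integrable : Integrable fun x => deriv q (t - ‖x‖) * ghostWeight q t x *
      ∑ j, x j / ‖x‖ * energyFlux (V x) (A x) j :=
    integrable_deriv_mul_ghostWeight_mul_sum hq
      (fun j => continuous_finsetSum _ fun i _ => (hV i).mul (hA i j))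
      (fun j => HasCompactSupport.intro hK fun x hx => by simp [hVK x hx]) t
  rw [← integral_const_mul, ← integral_add
    (integrable_deriv_mul_ghostWeight_mul_energyDensity hq hV hA hK hVK hAK t)
    (flux_integrable.const_mul 2)]
  refine integral_congr_ae (.of_forall fun x => ?_)
  simp only [goodDensity_eq _ _ (div_norm_eq_zero_or_sum_sq_eq_one x)]
  ring

end GoodDensity

section EnergyIdentity

variable {q : ℝ → ℝ} {v : ℝ → EuclideanSpace ℝ ι → κ → ℝ}
  {G : ℝ → EuclideanSpace ℝ ι → κ → ι → ℝ} {K : Set (EuclideanSpace ℝ ι)}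

lemma contDiff_energyDensity {n : WithTop ℕ∞}
    (hv : ∀ i, ContDiff ℝ n fun z : ℝ × EuclideanSpace ℝ ι => v z.1 z.2 i)
    (hG : ∀ i j, ContDiff ℝ n fun z : ℝ × EuclideanSpace ℝ ι => G z.1 z.2 i j) :
    ContDiff ℝ n fun z : ℝ × EuclideanSpace ℝ ι =>
      energyDensity (v z.1 z.2) (G z.1 z.2) := by
  unfold energyDensity
  fun_prop

variable [DecidableEq ι]

/-- The power `v · (∂_t v - div G) + G : (∂_t G - ∇v)` supplied to the fields by the right-hand
sides of the system, which are read off from `v` and `G` themselves. -/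
def residualPower (v : ℝ → EuclideanSpace ℝ ι → κ → ℝ) (G : ℝ → EuclideanSpace ℝ ι → κ → ι → ℝ)
    (t : ℝ) (x : EuclideanSpace ℝ ι) : ℝ :=
  (∑ i, v t x i * (deriv (fun s => v s x i) t - divergence (fun y => G t y i) x)) +
    ∑ i, ∑ j, G t x i j *
      (deriv (fun s => G s x i j) t - partialDeriv j (fun y => v t y i) x)

lemma continuous_residualPower
    (hv : ∀ i, ContDiff ℝ 1 fun z : ℝ × EuclideanSpace ℝ ι => v z.1 z.2 i)
    (hG : ∀ i j, ContDiff ℝ 1 fun z : ℝ × EuclideanSpace ℝ ι => G z.1 z.2 i j) (t : ℝ) :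
    Continuous (residualPower v G t) := by
  have hv_slice (i : κ) : ContDiff ℝ 1 fun y => v t y i := (hv i).comp (contDiff_prodMk_right t)
  have hG_slice (i : κ) (j : ι) : ContDiff ℝ 1 fun y => G t y i j :=
    (hG i j).comp (contDiff_prodMk_right t)
  have hv_time (i : κ) : Continuous fun x => deriv (fun s => v s x i) t :=
    (continuous_deriv_time (hv i)).comp (Continuous.prodMk_right t)
  have hG_time (i : κ) (j : ι) : Continuous fun x => deriv (fun s => G s x i j) t :=
    (continuous_deriv_time (hG i j)).comp (Continuous.prodMk_right t)
  have hv_space (i : κ) (j : ι) := continuous_partialDeriv (hv_slice i) j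
  have hG_space (i : κ) := continuous_divergence (hG_slice i)
  unfold residualPower
  fun_prop

theorem hasDerivAt_energyDensity
    (hv : ∀ i, ContDiff ℝ 1 fun z : ℝ × EuclideanSpace ℝ ι => v z.1 z.2 i)
    (hG : ∀ i j, ContDiff ℝ 1 fun z : ℝ × EuclideanSpace ℝ ι => G z.1 z.2 i j) (t : ℝ)
    (x : EuclideanSpace ℝ ι) :
    HasDerivAt (fun s => energyDensity (v s x) (G s x))
      (2 * (residualPower v G t x + divergence (fun y => energyFlux (v t y) (G t y)) x)) t := by
  have hv_sq (i : κ) : HasDerivAt (fun s => v s x i ^ 2)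
      (2 * (v t x i * deriv (fun s => v s x i) t)) t := by
    simpa [mul_assoc] using (hasDerivAt_time (hv i) t x).fun_pow 2
  have hG_sq (i : κ) (j : ι) : HasDerivAt (fun s => G s x i j ^ 2)
      (2 * (G t x i j * deriv (fun s => G s x i j) t)) t := by
    simpa [mul_assoc] using (hasDerivAt_time (hG i j) t x).fun_pow 2
  have divergence_flux : divergence (fun y => energyFlux (v t y) (G t y)) x
      = ∑ i, v t x i * divergence (fun y => G t y i) x
        + ∑ i, ∑ j, G t x i j * partialDeriv j (fun y => v t y i) x := by
    have hv_slice (i : κ) : ContDiff ℝ 1 fun y => v t y i := (hv i).comp (contDiff_prodMk_right t)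
    have hG_slice (i : κ) (j : ι) : ContDiff ℝ 1 fun y => G t y i j :=
      (hG i j).comp (contDiff_prodMk_right t)
    simp only [divergence, energyFlux, Finset.mul_sum, ← Finset.sum_add_distrib,
      partialDeriv_sum_mul hv_slice fun i => hG_slice i _]
    exact Finset.sum_comm
  refine ((HasDerivAt.fun_sum fun i _ => hv_sq i).fun_add
    (HasDerivAt.fun_sum fun i _ => HasDerivAt.fun_sum fun j _ => hG_sq i j)).congr_deriv ?_
  simp only [residualPower, divergence_flux, mul_sub, Finset.sum_sub_distrib, ← Finset.mul_sum]
  ring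

lemma integrable_ghostWeight_mul_residualPower (hq : Continuous q)
    (hv : ∀ i, ContDiff ℝ 1 fun z : ℝ × EuclideanSpace ℝ ι => v z.1 z.2 i)
    (hG : ∀ i j, ContDiff ℝ 1 fun z : ℝ × EuclideanSpace ℝ ι => G z.1 z.2 i j)
    (hK : IsCompact K) {t : ℝ} (hvK : ∀ x ∉ K, v t x = 0) (hGK : ∀ x ∉ K, G t x = 0) :
    Integrable fun x => ghostWeight q t x * residualPower v G t x := by
  refine integrable_of_forall_notMem_eq_zero
    ((continuous_ghostWeight_right hq t).mul (continuous_residualPower hv hG t)) hK fun x hx => ?_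
  simp [residualPower, hvK x hx, hGK x hx]

theorem hasDerivAt_integral_ghostWeight_mul_energyDensity (hq : ContDiff ℝ 1 q)
    (hv : ∀ i, ContDiff ℝ 1 fun z : ℝ × EuclideanSpace ℝ ι => v z.1 z.2 i)
    (hG : ∀ i j, ContDiff ℝ 1 fun z : ℝ × EuclideanSpace ℝ ι => G z.1 z.2 i j)
    (hK : IsCompact K) (hvK : ∀ s, ∀ x ∉ K, v s x = 0) (hGK : ∀ s, ∀ x ∉ K, G s x = 0) (t : ℝ) :
    HasDerivAt (fun s => ∫ x, ghostWeight q s x * energyDensity (v s x) (G s x))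
      (2 * (∫ x, ghostWeight q t x * residualPower v G t x)
        - ∫ x, deriv q (t - ‖x‖) * ghostWeight q t x *
            goodDensity (v t x) (G t x) (fun j => x j / ‖x‖)) t := by
  have hv_slice (i : κ) : ContDiff ℝ 1 fun x => v t x i := (hv i).comp (contDiff_prodMk_right t)
  have hG_slice (i : κ) (j : ι) : ContDiff ℝ 1 fun x => G t x i j :=
    (hG i j).comp (contDiff_prodMk_right t)
  have hX := contDiff_energyFlux hv_slice hG_slice
  have hX' (j : ι) : HasCompactSupport fun x => energyFlux (v t x) (G t x) j :=
    HasCompactSupport.intro hK fun x hx => by simp [energyFlux, hvK t x hx]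
  have hv_cont (i : κ) := (hv_slice i).continuous
  have hG_cont (i : κ) (j : ι) := (hG_slice i j).continuous
  have power_integrable :=
    integrable_ghostWeight_mul_residualPower hq.continuous hv hG hK (hvK t) (hGK t)
  have divergence_integrable := integrable_ghostWeight_mul_divergence hq.continuous hX hX' t
  have energy_integrable := integrable_deriv_mul_ghostWeight_mul_energyDensity hq hv_cont hG_cont
    hK (hvK t) (hGK t) t
  refine (hasDerivAt_integral_ghostWeight_mul hq (contDiff_energyDensity hv hG) hK
    (fun s x hx => by simp [energyDensity, hvK s x hx, hGK s x hx]) t).congr_deriv ?_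
  calc ∫ x, (ghostWeight q t x * deriv (fun s => energyDensity (v s x) (G s x)) t
        - deriv q (t - ‖x‖) * ghostWeight q t x * energyDensity (v t x) (G t x))
      = ∫ x, (2 * (ghostWeight q t x * residualPower v G t x)
          + 2 * (ghostWeight q t x * divergence (fun y => energyFlux (v t y) (G t y)) x)
          - deriv q (t - ‖x‖) * ghostWeight q t x * energyDensity (v t x) (G t x)) := by
        refine integral_congr_ae (.of_forall fun x => ?_)
        simp only [(hasDerivAt_energyDensity hv hG t x).deriv]
        ring
    _ = 2 * (∫ x, ghostWeight q t x * residualPower v G t x)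
          + 2 * (∫ x, ghostWeight q t x * divergence (fun y => energyFlux (v t y) (G t y)) x)
          - ∫ x, deriv q (t - ‖x‖) * ghostWeight q t x * energyDensity (v t x) (G t x) := by
        have h_power := power_integrable.const_mul 2
        have h_divergence := divergence_integrable.const_mul 2
        rw [integral_sub (h_power.fun_add h_divergence) energy_integrable,
          integral_add h_power h_divergence, integral_const_mul, integral_const_mul]
    _ = _ := by
        rw [integral_ghostWeight_mul_divergence hq hX hX' t,
          integral_deriv_mul_ghostWeight_mul_goodDensity hq hv_cont hG_cont hK (hvK t) (hGK t) t]
        ring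

end EnergyIdentity

theorem ghost_weight_energy_identity_general [DecidableEq ι] {q : ℝ → ℝ} (hq : ContDiff ℝ 1 q)
    {v : ℝ → EuclideanSpace ℝ ι → ι → ℝ} {G : ℝ → EuclideanSpace ℝ ι → ι → ι → ℝ}
    {p : EuclideanSpace ℝ ι → ℝ} {f : EuclideanSpace ℝ ι → ι → ℝ}
    {g : EuclideanSpace ℝ ι → ι → ι → ℝ}
    (hv : ∀ i, ContDiff ℝ 1 fun z : ℝ × EuclideanSpace ℝ ι => v z.1 z.2 i)
    (hG : ∀ i j, ContDiff ℝ 1 fun z : ℝ × EuclideanSpace ℝ ι => G z.1 z.2 i j)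
    (hp : ContDiff ℝ 1 p) {K : Set (EuclideanSpace ℝ ι)} (hK : IsCompact K)
    (hvK : ∀ s, ∀ x ∉ K, v s x = 0) (hGK : ∀ s, ∀ x ∉ K, G s x = 0) {t : ℝ}
    (hmomentum : ∀ x i, deriv (fun s => v s x i) t - divergence (fun y => G t y i) x
      = -partialDeriv i p x + f x i)
    (hdeformation : ∀ x i j, deriv (fun s => G s x i j) t - partialDeriv j (fun y => v t y i) x
      = g x i j) :
    HasDerivAt (fun s => ∫ x, ghostWeight q s x * energyDensity (v s x) (G s x))
      (2 * (∫ x, ghostWeight q t x *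
          ((∑ i, f x i * v t x i) + ∑ i, ∑ j, g x i j * G t x i j))
        - 2 * (∫ x, ghostWeight q t x * ∑ i, v t x i * partialDeriv i p x)
        - ∫ x, deriv q (t - ‖x‖) * ghostWeight q t x *
            goodDensity (v t x) (G t x) (fun j => x j / ‖x‖)) t := by
  have power_eq (x : EuclideanSpace ℝ ι) :
      (∑ i, f x i * v t x i) + ∑ i, ∑ j, g x i j * G t x i j
        = residualPower v G t x + ∑ i, v t x i * partialDeriv i p x := by
    simp only [residualPower, hmomentum, hdeformation, mul_add, mul_neg, Finset.sum_add_distrib,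
      Finset.sum_neg_distrib, mul_comm (f x _), mul_comm (g x _ _)]
    ring
  have pressure_integrable : Integrable fun x =>
      ghostWeight q t x * ∑ i, v t x i * partialDeriv i p x := by
    have hw := continuous_ghostWeight_right (E := EuclideanSpace ℝ ι) hq.continuous t
    have hv_slice (i : ι) := (hv i).continuous.comp (Continuous.prodMk_right t)
    refine integrable_of_forall_notMem_eq_zero (hw.mul (continuous_finsetSum _ fun i _ =>
      (hv_slice i).mul (continuous_partialDeriv hp i))) hK fun x hx => ?_
    simp [hvK t x hx]
  refine (hasDerivAt_integral_ghostWeight_mul_energyDensity hq hv hG hK hvK hGK t).congr_deriv ?_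
  simp only [power_eq, mul_add (ghostWeight q t _)]
  rw [integral_add (integrable_ghostWeight_mul_residualPower hq.continuous hv hG hK (hvK t)
    (hGK t)) pressure_integrable]
  ring

end Coordinates

lemma contDiff_ghost : ContDiff ℝ 1 ghost :=
  Real.contDiff_arctan

lemma deriv_ghost_mul_ghostWeight {E : Type*} [NormedAddCommGroup E] (t : ℝ) (x : E) :
    deriv ghost (t - ‖x‖) * ghostWeight ghost t x
      = Real.exp (-ghost (t - ‖x‖)) / (1 + (t - ‖x‖) ^ 2) := by
  have hderiv : deriv ghost = fun σ => 1 / (1 + σ ^ 2) := Real.deriv_arctan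
  rw [hderiv, ghostWeight, one_div_mul_eq_div]

/-- the ghost-weight energy identity. For smooth `v, G, p, f, g` on
`[0,T] × ℝ³`, compactly supported in space uniformly in time, satisfying
`∂_t v_i − ∂_j G_{ij} = −∂_i p + f_i` and `∂_t G_{ij} − ∂_j v_i = g_{ij}`,
the ghost-weighted energy `ℰ` is differentiable on `(0,T)` and
`ℰ′(t) + ∫ e^{−q}/(1+(t−r)²) (|v + Gω|² + ‖G − (Gω)ωᵀ‖_F²) dx
  = 2∫ e^{−q} (f·v + g_{ij}G_{ij}) dx − 2∫ e^{−q} v·∇p dx`. -/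
theorem ghost_weight_energy_identity
    (T : ℝ) (hT : 0 < T)
    (v f : ℝ → E3 → Fin 3 → ℝ)
    (G g : ℝ → E3 → Fin 3 → Fin 3 → ℝ)
    (p : ℝ → E3 → ℝ)
    (hv : ContDiff ℝ (⊤ : ℕ∞) (fun z : ℝ × E3 => v z.1 z.2))
    (hG : ContDiff ℝ (⊤ : ℕ∞) (fun z : ℝ × E3 => G z.1 z.2))
    (hp : ContDiff ℝ (⊤ : ℕ∞) (fun z : ℝ × E3 => p z.1 z.2))
    (hf : ContDiff ℝ (⊤ : ℕ∞) (fun z : ℝ × E3 => f z.1 z.2))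
    (hg : ContDiff ℝ (⊤ : ℕ∞) (fun z : ℝ × E3 => g z.1 z.2))
    (R : ℝ)
    (hsupp : ∀ t x, R ≤ ‖x‖ →
      v t x = 0 ∧ G t x = 0 ∧ p t x = 0 ∧ f t x = 0 ∧ g t x = 0)
    (heq1 : ∀ t ∈ Set.Icc (0 : ℝ) T, ∀ (x : E3) (i : Fin 3),
      deriv (fun s => v s x i) t - ∑ j, pd j (fun y => G t y i j) x
        = -pd i (fun y => p t y) x + f t x i)
    (heq2 : ∀ t ∈ Set.Icc (0 : ℝ) T, ∀ (x : E3) (i j : Fin 3),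
      deriv (fun s => G s x i j) t - pd j (fun y => v t y i) x = g t x i j) :
    ∀ t ∈ Set.Ioo (0 : ℝ) T,
      ∃ E' : ℝ,
        HasDerivAt (ghostEnergy v G) E' t ∧
        E' + (∫ x : E3,
            (Real.exp (-(ghost (t - ‖x‖))) / (1 + (t - ‖x‖) ^ 2)) *
              ((∑ i, (v t x i + ∑ j, G t x i j * (x j / ‖x‖)) ^ 2)
                + ∑ i, ∑ j,
                    (G t x i j - (∑ l, G t x i l * (x l / ‖x‖)) * (x j / ‖x‖)) ^ 2))
          = 2 * (∫ x : E3, Real.exp (-(ghost (t - ‖x‖))) *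
                ((∑ i, f t x i * v t x i) + ∑ i, ∑ j, g t x i j * G t x i j))
            - 2 * ∫ x : E3, Real.exp (-(ghost (t - ‖x‖))) *
                ∑ i, v t x i * pd i (fun y => p t y) x := by
  intro t ht
  have hsmooth : (1 : WithTop ℕ∞) ≤ (⊤ : ℕ∞) := by exact_mod_cast le_top
  have hzero (s : ℝ) (x : E3) (hx : x ∉ Metric.closedBall 0 R) : v s x = 0 ∧ G s x = 0 := by
    have h := hsupp s x (not_le.1 (mt mem_closedBall_zero_iff.2 hx)).le
    exact ⟨h.1, h.2.1⟩
  have hderiv := ghost_weight_energy_identity_general contDiff_ghost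
    (contDiff_pi.1 (hv.of_le hsmooth)) (fun i => contDiff_pi.1 (contDiff_pi.1 (hG.of_le hsmooth) i))
    ((hp.of_le hsmooth).comp (contDiff_prodMk_right t)) (isCompact_closedBall 0 R)
    (fun s x hx => (hzero s x hx).1) (fun s x hx => (hzero s x hx).2)
    (heq1 t (Set.Ioo_subset_Icc_self ht)) (heq2 t (Set.Ioo_subset_Icc_self ht))
  simp only [deriv_ghost_mul_ghostWeight] at hderiv
  exact ⟨_, hderiv, sub_add_cancel _ _⟩

end
end

section
/- There exists a constant C > 0, independent of t and f, such that for every t ≥ 0 and every f ∈ C_c^∞(ℝ³): ⟨t⟩ · sup_{|x| ≤ ⟨t⟩/16} |f(x)| ≤ C ( ‖f‖_{L²(|x| ≤ ⟨t⟩/8)} + ‖⟨t−r⟩ ∇f‖_{L²(|x| ≤ ⟨t⟩/8)} + ‖⟨t−r⟩ ∇²f‖_{L²(|x| ≤ ⟨t⟩/8)} ), where r = |x| and ∇²f is the Hessian of f. -/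
open MeasureTheory

noncomputable section

/-- The Japanese bracket `⟨s⟩ = √(1+s²)`. -/
noncomputable def jb (s : ℝ) : ℝ := Real.sqrt (1 + s ^ 2)

/-!
For a function `g` on `[0, R]`, the modified function `H = χ • (g - q • g')` with
`χ r = 1 - r² / R²` and `q r = ρ r / (ρ + r)` has `H 0 = g 0` and `H R = 0`. Since `q' 0 = 1`, the
coefficients of `g` and its derivatives in `H'` are all `O(r)`, so that Cauchy–Schwarz bounds
`‖g 0‖²` by an energy of `g` with the weight `r²`, which is the polar density in dimension three.
Applying this on every ray issuing from `x` and averaging over the sphere gives a Sobolev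
inequality on the ball of radius `R` around `x`, in which the derivatives carry a scale `ρ ≤ R` of
their own. For `R = ⟨t⟩ / 16` and `ρ = 1 / 16` the value term gains the factor `⟨t⟩⁻³`, while the
factor `⟨t⟩²` multiplying the derivative terms is absorbed by their weights, because
`⟨t⟩ ≤ 2⟨t - r⟩` for `r ≤ ⟨t⟩ / 8`.
-/

section CauchySchwarz

variable {α F : Type*} [MeasurableSpace α] {μ : Measure α} [NormedAddCommGroup F] [NormedSpace ℝ F]
  {v w : α → ℝ}

theorem memLp_two_sqrt (hv : Integrable v μ) (hv₀ : 0 ≤ᵐ[μ] v) : MemLp (fun a ↦ √(v a)) 2 μ := by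
  rw [memLp_two_iff_integrable_sq
    (Real.continuous_sqrt.comp_aestronglyMeasurable hv.aestronglyMeasurable)]
  exact hv.congr (hv₀.mono fun a ha ↦ (Real.sq_sqrt ha).symm)

theorem integral_sqrt_mul_sqrt_le (hv : Integrable v μ) (hw : Integrable w μ)
    (hv₀ : 0 ≤ᵐ[μ] v) (hw₀ : 0 ≤ᵐ[μ] w) :
    ∫ a, √(v a) * √(w a) ∂μ ≤ √(∫ a, v a ∂μ) * √(∫ a, w a ∂μ) := by
  have holder := integral_mul_le_Lp_mul_Lq_of_nonneg .two_two
    (.of_forall fun a ↦ Real.sqrt_nonneg (v a)) (.of_forall fun a ↦ Real.sqrt_nonneg (w a))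
    (by simpa using memLp_two_sqrt hv hv₀) (by simpa using memLp_two_sqrt hw hw₀)
  have integral_sq_sqrt {u : α → ℝ} (hu₀ : 0 ≤ᵐ[μ] u) : ∫ a, √(u a) ^ 2 ∂μ = ∫ a, u a ∂μ :=
    integral_congr_ae (hu₀.mono fun a ha ↦ Real.sq_sqrt ha)
  simpa only [Real.rpow_two, ← Real.sqrt_eq_rpow, integral_sq_sqrt hv₀, integral_sq_sqrt hw₀]
    using holder

theorem sq_norm_integral_le_of_sq_norm_le_mul {h : α → F} (hv : Integrable v μ)
    (hw : Integrable w μ) (hv₀ : 0 ≤ᵐ[μ] v) (hw₀ : 0 ≤ᵐ[μ] w)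
    (hvw : ∀ᵐ a ∂μ, ‖h a‖ ^ 2 ≤ v a * w a) :
    ‖∫ a, h a ∂μ‖ ^ 2 ≤ (∫ a, v a ∂μ) * ∫ a, w a ∂μ := by
  have norm_h_le : ∀ᵐ a ∂μ, ‖h a‖ ≤ √(v a) * √(w a) := by
    filter_upwards [hv₀, hvw] with a hva ha
    exact Real.sqrt_mul hva (w a) ▸ Real.le_sqrt_of_sq_le ha
  calc ‖∫ a, h a ∂μ‖ ^ 2 ≤ (∫ a, √(v a) * √(w a) ∂μ) ^ 2 := by
        gcongr
        exact norm_integral_le_of_norm_le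
          ((memLp_two_sqrt hv hv₀).integrable_mul (memLp_two_sqrt hw hw₀)) norm_h_le
    _ ≤ (√(∫ a, v a ∂μ) * √(∫ a, w a ∂μ)) ^ 2 := by
        gcongr
        exact integral_sqrt_mul_sqrt_le hv hw hv₀ hw₀
    _ = (∫ a, v a ∂μ) * ∫ a, w a ∂μ := by
        rw [mul_pow, Real.sq_sqrt (integral_nonneg_of_ae hv₀),
          Real.sq_sqrt (integral_nonneg_of_ae hw₀)]

end CauchySchwarz

section OrthonormalBasis

variable {ι E F : Type*} [Fintype ι] [NormedAddCommGroup E] [InnerProductSpace ℝ E]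
  [NormedAddCommGroup F] [NormedSpace ℝ F]

theorem sq_opNorm_le_sum (b : OrthonormalBasis ι ℝ E) (L : E →L[ℝ] F) :
    ‖L‖ ^ 2 ≤ ∑ i, ‖L (b i)‖ ^ 2 := by
  suffices ‖L‖ ≤ √(∑ i, ‖L (b i)‖ ^ 2) from
    (Real.le_sqrt (norm_nonneg L) (by positivity)).1 this
  refine L.opNorm_le_bound (Real.sqrt_nonneg _) fun v ↦ ?_
  calc ‖L v‖ = ‖∑ i, b.repr v i • L (b i)‖ := by
        conv_lhs => rw [← b.sum_repr v, map_sum]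
        simp only [map_smul]
    _ ≤ ∑ i, ‖L (b i)‖ * ‖b.repr v i‖ := by
        refine (norm_sum_le _ _).trans_eq (Finset.sum_congr rfl fun i _ ↦ ?_)
        rw [norm_smul, mul_comm]
    _ ≤ √(∑ i, ‖L (b i)‖ ^ 2) * ‖v‖ := by
        rw [← b.repr.norm_map v, EuclideanSpace.norm_eq]
        exact Real.sum_mul_le_sqrt_mul_sqrt _ _ _

theorem sq_norm_fderiv_fderiv_le_sum (b : OrthonormalBasis ι ℝ E) {f : E → F}
    (hf : ContDiff ℝ 2 f) (y : E) :
    ‖fderiv ℝ (fderiv ℝ f) y‖ ^ 2 ≤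
      ∑ i, ∑ j, ‖fderiv ℝ (fun z ↦ fderiv ℝ f z (b j)) y (b i)‖ ^ 2 := by
  have hdf : DifferentiableAt ℝ (fderiv ℝ f) y :=
    (hf.fderiv_right (m := 1) (by norm_num)).differentiable (by norm_num) y
  have fderiv_apply (i j : ι) :
      fderiv ℝ (fun z ↦ fderiv ℝ f z (b j)) y (b i) = fderiv ℝ (fderiv ℝ f) y (b i) (b j) := by
    simp [fderiv_clm_apply hdf (differentiableAt_const _)]
  simp only [fderiv_apply]
  exact (sq_opNorm_le_sum b _).trans (Finset.sum_le_sum fun i _ ↦ sq_opNorm_le_sum b _)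

end OrthonormalBasis

section Polar

open Metric Set Module

variable {E F : Type*} [NormedAddCommGroup E] [NormedSpace ℝ E] [FiniteDimensional ℝ E]
  [Nontrivial E] [MeasurableSpace E] [BorelSpace E] [NormedAddCommGroup F] [NormedSpace ℝ F]
  (μ : Measure E) [μ.IsAddHaarMeasure]

theorem integral_volumeIoiPow (n : ℕ) (g : ℝ → F) :
    ∫ r : Ioi (0 : ℝ), g r ∂Measure.volumeIoiPow n = ∫ r in Ioi (0 : ℝ), r ^ n • g r := by
  have measurable_density : Measurable fun r : Ioi (0 : ℝ) ↦ ((r : ℝ) ^ n).toNNReal := by fun_prop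
  rw [Measure.volumeIoiPow]
  simp only [ENNReal.ofReal]
  rw [integral_withDensity_eq_integral_smul measurable_density,
    integral_subtype_comap measurableSet_Ioi fun r : ℝ ↦ (r ^ n).toNNReal • g r]
  refine setIntegral_congr_fun measurableSet_Ioi fun r (hr : 0 < r) ↦ ?_
  simp only [NNReal.smul_def, Real.coe_toNNReal _ (pow_nonneg hr.le n)]

theorem integral_eq_integral_toSphere {G : E → F} (hG : Integrable G μ) :
    ∫ x, G x ∂μ =
      ∫ ω, (∫ r in Ioi (0 : ℝ), r ^ (finrank ℝ E - 1) • G (r • (ω : E))) ∂μ.toSphere := by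
  have hpolar := μ.measurePreserving_homeomorphUnitSphereProd
  have hemb := (homeomorphUnitSphereProd E).measurableEmbedding
  let G' : sphere (0 : E) 1 × Ioi (0 : ℝ) → F := fun p ↦ G ((p.2 : ℝ) • (p.1 : E))
  have hG' : G' ∘ homeomorphUnitSphereProd E = G ∘ Subtype.val := by
    funext x
    simp only [G', Function.comp_apply, ← homeomorphUnitSphereProd_symm_apply_coe,
      Homeomorph.symm_apply_apply]
  have integrable_G' : Integrable G' (μ.toSphere.prod (.volumeIoiPow (finrank ℝ E - 1))) := by
    rw [← hpolar.integrable_comp_emb hemb, hG',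
      ← integrableOn_iff_comap_subtypeVal (measurableSet_singleton 0).compl]
    exact hG.integrableOn
  calc ∫ x, G x ∂μ = ∫ x : ({0}ᶜ : Set E), G x ∂μ.comap (↑) := by
        rw [integral_subtype_comap (measurableSet_singleton _).compl, restrict_compl_singleton]
    _ = ∫ p, G' p ∂μ.toSphere.prod (.volumeIoiPow (finrank ℝ E - 1)) := by
        rw [← hpolar.integral_comp hemb]
        exact congrArg (integral _) hG'.symm
    _ = _ := by
        rw [integral_prod _ integrable_G']
        exact integral_congr_ae (.of_forall fun ω ↦
          integral_volumeIoiPow _ fun r ↦ G (r • (ω : E)))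

theorem integral_closedBall_eq_integral_toSphere {G : E → F} (hG : Continuous G) (x : E) {R : ℝ}
    (hR : 0 ≤ R) :
    ∫ y in closedBall x R, G y ∂μ =
      ∫ ω, (∫ r in (0)..R, r ^ (finrank ℝ E - 1) • G (x + r • (ω : E))) ∂μ.toSphere := by
  have translate : ∫ y in closedBall x R, G y ∂μ = ∫ z in closedBall 0 R, G (x + z) ∂μ := by
    rw [← (measurePreserving_add_left μ x).setIntegral_preimage_emb
      (Homeomorph.addLeft x).measurableEmbedding G, preimage_add_closedBall, sub_self]
  have integrable_ball : IntegrableOn (fun z ↦ G (x + z)) (closedBall 0 R) μ :=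
    (by fun_prop : Continuous fun z ↦ G (x + z)).continuousOn.integrableOn_compact
      (isCompact_closedBall _ _)
  rw [translate, ← integral_indicator measurableSet_closedBall, integral_eq_integral_toSphere μ
    (integrable_ball.integrable_indicator measurableSet_closedBall)]
  congr 1 with ω
  have indicator_ray : EqOn
      (fun r : ℝ ↦ r ^ (finrank ℝ E - 1) •
        (closedBall 0 R).indicator (fun z ↦ G (x + z)) (r • (ω : E)))
      ((Iic R).indicator fun r ↦ r ^ (finrank ℝ E - 1) • G (x + r • (ω : E))) (Ioi 0) := by
    intro r (hr : 0 < r)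
    by_cases hrR : r ≤ R <;> simp [norm_smul, abs_of_pos hr, hrR]
  rw [setIntegral_congr_fun measurableSet_Ioi indicator_ray,
    setIntegral_indicator measurableSet_Iic, Ioi_inter_Iic, intervalIntegral.integral_of_le hR]

theorem le_integral_closedBall_of_le_integral_ray {G : E → ℝ} (hG : Continuous G) {x : E}
    {R K : ℝ} (hR : 0 ≤ R)
    (hK : ∀ ω : E, ‖ω‖ = 1 → K ≤ ∫ r in (0)..R, r ^ (finrank ℝ E - 1) * G (x + r • ω)) :
    finrank ℝ E * μ.real (ball 0 1) * K ≤ ∫ y in closedBall x R, G y ∂μ := by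
  have continuous_ray : Continuous fun ω : sphere (0 : E) 1 ↦
      ∫ r in (0)..R, r ^ (finrank ℝ E - 1) • G (x + r • (ω : E)) :=
    intervalIntegral.continuous_parametric_intervalIntegral_of_continuous' (by fun_prop) 0 R
  calc finrank ℝ E * μ.real (ball 0 1) * K = ∫ _, K ∂μ.toSphere := by
        rw [integral_const, μ.toSphere_real_apply_univ, smul_eq_mul]
    _ ≤ ∫ ω, (∫ r in (0)..R, r ^ (finrank ℝ E - 1) • G (x + r • (ω : E))) ∂μ.toSphere :=
        integral_mono (integrable_const K)
          (continuous_ray.integrable_of_hasCompactSupport (.of_compactSpace _))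
          fun ω ↦ hK ω (norm_eq_of_mem_sphere ω)
    _ = ∫ y in closedBall x R, G y ∂μ := (integral_closedBall_eq_integral_toSphere μ hG x hR).symm

end Polar

section Radial

/-- A cutoff with value `1` at `0` and value `0` at `R`; it is quadratic so that its derivative is
`O(r)` at the origin, which matches the weight `r²` of polar coordinates in dimension three. -/
def quadraticCutoff (R r : ℝ) : ℝ := 1 - r ^ 2 / R ^ 2

/-- The function with reciprocal `1/r + 1/ρ`: it behaves like `r` near `0`, where it cancels the
first order variation of a function `g` in `g - harmonicTaper ρ • g'`, and it stays below `ρ` for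
`0 ≤ r`. Only its values for `r ≠ -ρ` are meaningful. -/
def harmonicTaper (ρ r : ℝ) : ℝ := ρ * r / (ρ + r)

variable {ρ R r : ℝ}

theorem hasDerivAt_quadraticCutoff : HasDerivAt (quadraticCutoff R) (-(2 * r / R ^ 2)) r := by
  unfold quadraticCutoff
  simpa using ((hasDerivAt_pow 2 r).div_const (R ^ 2)).const_sub 1

theorem hasDerivAt_harmonicTaper (h : ρ + r ≠ 0) :
    HasDerivAt (harmonicTaper ρ) ((ρ / (ρ + r)) ^ 2) r := by
  refine (((hasDerivAt_id r).const_mul ρ).div ((hasDerivAt_id r).const_add ρ) h).congr_deriv ?_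
  simp only [id]
  field_simp
  ring

theorem quadraticCutoff_mem_Icc (hr : r ∈ Set.Icc 0 R) :
    quadraticCutoff R r ∈ Set.Icc (0 : ℝ) 1 := by
  have : r ^ 2 / R ^ 2 ≤ 1 := div_le_one_of_le₀ (pow_le_pow_left₀ hr.1 hr.2 2) (sq_nonneg R)
  constructor <;> unfold quadraticCutoff <;> linarith [show 0 ≤ r ^ 2 / R ^ 2 by positivity]

theorem mul_harmonicTaper_le (hρ : 0 < ρ) (hρR : ρ ≤ R) (hr : r ∈ Set.Icc 0 R) :
    2 * r / R ^ 2 * harmonicTaper ρ r ≤ r * (2 / (ρ + r)) := by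
  have hr₀ := hr.1
  have hR : 0 < R := hρ.trans_le hρR
  have scale_le_one : ρ * r / R ^ 2 ≤ 1 := by
    rw [sq]
    exact div_le_one_of_le₀ (mul_le_mul hρR hr.2 hr₀ hR.le) (by positivity)
  calc 2 * r / R ^ 2 * harmonicTaper ρ r
      = r * (2 / (ρ + r)) * (ρ * r / R ^ 2) := by unfold harmonicTaper; ring
    _ ≤ r * (2 / (ρ + r)) := mul_le_of_le_one_right (by positivity) scale_le_one

theorem one_sub_deriv_harmonicTaper_mem_Icc (hρ : 0 < ρ) (hr : 0 ≤ r) :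
    1 - (ρ / (ρ + r)) ^ 2 ∈ Set.Icc 0 (r * (2 / (ρ + r))) := by
  have : 1 - (ρ / (ρ + r)) ^ 2 = r * (2 / (ρ + r)) - (r / (ρ + r)) ^ 2 := by
    field_simp
    ring
  constructor
  · exact sub_nonneg.2 (pow_le_one₀ (by positivity)
      (div_le_one_of_le₀ (by linarith) (by positivity)))
  · linarith [sq_nonneg (r / (ρ + r))]

/-- The dual weight in the Cauchy–Schwarz estimate of `taperedJetDeriv`. The term `4 / R` pays for
the value of `g`, and `17 = 4² + 1²` for the coefficients of its first two derivatives. -/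
def taperWeight (ρ R r : ℝ) : ℝ := 4 / R + 17 / ρ * (ρ / (ρ + r)) ^ 2

theorem taperWeight_nonneg (hρ : 0 ≤ ρ) (hR : 0 ≤ R) : 0 ≤ taperWeight ρ R r := by
  unfold taperWeight
  positivity

theorem intervalIntegrable_taperWeight (hρ : 0 < ρ) (hR : 0 ≤ R) :
    IntervalIntegrable (taperWeight ρ R) volume 0 R := by
  have add_ne_zero : ∀ r ∈ Set.Icc 0 R, ρ + r ≠ 0 := fun r hr ↦ by linarith [hr.1]
  unfold taperWeight
  exact ContinuousOn.intervalIntegrable_of_Icc hR (by fun_prop (disch := assumption))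

theorem integral_taperWeight_le (hρ : 0 < ρ) (hR : 0 < R) :
    ∫ r in (0)..R, taperWeight ρ R r ≤ 21 := by
  have add_ne_zero : ∀ r ∈ Set.uIcc 0 R, ρ + r ≠ 0 := fun r hr ↦ by
    rw [Set.uIcc_of_le hR.le] at hr
    linarith [hr.1]
  have primitive : ∀ r ∈ Set.uIcc 0 R, HasDerivAt
      (fun r ↦ 4 / R * r + 17 / ρ * harmonicTaper ρ r) (taperWeight ρ R r) r :=
    fun r hr ↦ by
      simpa [taperWeight] using ((hasDerivAt_id r).const_mul (4 / R)).fun_add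
        ((hasDerivAt_harmonicTaper (add_ne_zero r hr)).const_mul (17 / ρ))
  calc ∫ r in (0)..R, taperWeight ρ R r
      = 4 + 17 * (R / (ρ + R)) := by
        rw [intervalIntegral.integral_eq_sub_of_hasDerivAt primitive
          (intervalIntegrable_taperWeight hρ hR.le)]
        simp only [harmonicTaper, mul_zero, zero_div, add_zero, sub_zero]
        field_simp
    _ ≤ 21 := by linarith [div_le_one_of_le₀ (show R ≤ ρ + R by linarith) (by positivity)]

theorem sq_mul_add_le_taperWeight_mul (hρ : 0 < ρ) (hR : 0 < R) (a b c : ℝ) :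
    (r * (2 / R ^ 2 * a + 4 / (ρ + r) * b + ρ / (ρ + r) * c)) ^ 2 ≤
      taperWeight ρ R r * (r ^ 2 * (a ^ 2 / R ^ 3 + b ^ 2 / ρ + ρ * c ^ 2)) := by
  have cauchySchwarz := Finset.univ.sum_sq_le_sum_mul_sum_of_sq_le_mul
    (r := ![2 / R ^ 2 * a, 4 / (ρ + r) * b, ρ / (ρ + r) * c])
    (f := ![4 / R, 16 / ρ * (ρ / (ρ + r)) ^ 2, 1 / ρ * (ρ / (ρ + r)) ^ 2])
    (g := ![a ^ 2 / R ^ 3, b ^ 2 / ρ, ρ * c ^ 2])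
    (fun i _ ↦ by fin_cases i <;> dsimp <;> positivity)
    (fun i _ ↦ by fin_cases i <;> dsimp <;> positivity)
    (fun i _ ↦ le_of_eq <| by fin_cases i <;> dsimp <;> field_simp <;> norm_num [mul_comm])
  simp only [Fin.sum_univ_three, Matrix.cons_val] at cauchySchwarz
  calc (r * (2 / R ^ 2 * a + 4 / (ρ + r) * b + ρ / (ρ + r) * c)) ^ 2
      = r ^ 2 * (2 / R ^ 2 * a + 4 / (ρ + r) * b + ρ / (ρ + r) * c) ^ 2 := mul_pow _ _ _
    _ ≤ r ^ 2 * _ := mul_le_mul_of_nonneg_left cauchySchwarz (sq_nonneg r)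
    _ = _ := by
        unfold taperWeight
        ring

variable {F : Type*} [NormedAddCommGroup F] [NormedSpace ℝ F]

/-- The derivative at `r` of `quadraticCutoff R • (g - harmonicTaper ρ • g')`, as a function of the
2-jet `(u, v, w)` of `g` at `r`. -/
def taperedJetDeriv (ρ R r : ℝ) (u v w : F) : F :=
  quadraticCutoff R r • ((1 - (ρ / (ρ + r)) ^ 2) • v - harmonicTaper ρ r • w) -
    (2 * r / R ^ 2) • (u - harmonicTaper ρ r • v)

theorem hasDerivAt_quadraticCutoff_smul_sub {g g' : ℝ → F} {b : F} (hr : ρ + r ≠ 0)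
    (hg : HasDerivAt g (g' r) r) (hg' : HasDerivAt g' b r) :
    HasDerivAt (fun r ↦ quadraticCutoff R r • (g r - harmonicTaper ρ r • g' r))
      (taperedJetDeriv ρ R r (g r) (g' r) b) r := by
  refine (hasDerivAt_quadraticCutoff.fun_smul
    (hg.fun_sub ((hasDerivAt_harmonicTaper hr).fun_smul hg'))).congr_deriv ?_
  unfold taperedJetDeriv
  module

theorem norm_taperedJetDeriv_le (hρ : 0 < ρ) (hρR : ρ ≤ R) (hr : r ∈ Set.Icc 0 R) (u v w : F) :
    ‖taperedJetDeriv ρ R r u v w‖ ≤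
      r * (2 / R ^ 2 * ‖u‖ + 4 / (ρ + r) * ‖v‖ + ρ / (ρ + r) * ‖w‖) := by
  have hr₀ := hr.1
  obtain ⟨cutoff_nonneg, cutoff_le_one⟩ := quadraticCutoff_mem_Icc hr
  obtain ⟨defect_nonneg, defect_le⟩ := one_sub_deriv_harmonicTaper_mem_Icc hρ hr₀
  have taper_nonneg : 0 ≤ harmonicTaper ρ r := by unfold harmonicTaper; positivity
  have norm_remainder_deriv : ‖(1 - (ρ / (ρ + r)) ^ 2) • v - harmonicTaper ρ r • w‖ ≤
      r * (2 / (ρ + r)) * ‖v‖ + harmonicTaper ρ r * ‖w‖ := by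
    refine (norm_sub_le _ _).trans ?_
    rw [norm_smul_of_nonneg defect_nonneg, norm_smul_of_nonneg taper_nonneg]
    gcongr
  have norm_remainder : ‖u - harmonicTaper ρ r • v‖ ≤ ‖u‖ + harmonicTaper ρ r * ‖v‖ := by
    rw [← norm_smul_of_nonneg taper_nonneg]
    exact norm_sub_le _ _
  calc ‖taperedJetDeriv ρ R r u v w‖
      ≤ 1 * (r * (2 / (ρ + r)) * ‖v‖ + harmonicTaper ρ r * ‖w‖) +
        2 * r / R ^ 2 * (‖u‖ + harmonicTaper ρ r * ‖v‖) := by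
        refine (norm_sub_le _ _).trans ?_
        rw [norm_smul_of_nonneg cutoff_nonneg, norm_smul_of_nonneg (by positivity)]
        gcongr
    _ = r * (2 / (ρ + r)) * ‖v‖ + r * (ρ / (ρ + r)) * ‖w‖ + r * (2 / R ^ 2) * ‖u‖ +
        2 * r / R ^ 2 * harmonicTaper ρ r * ‖v‖ := by unfold harmonicTaper; ring
    _ ≤ r * (2 / (ρ + r)) * ‖v‖ + r * (ρ / (ρ + r)) * ‖w‖ + r * (2 / R ^ 2) * ‖u‖ +
        r * (2 / (ρ + r)) * ‖v‖ := by
        gcongr _ + ?_ * _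
        exact mul_harmonicTaper_le hρ hρR hr
    _ = _ := by ring

theorem integral_taperedJetDeriv [CompleteSpace F] {g g' g'' : ℝ → F} (hρ : 0 < ρ) (hR : 0 < R)
    (hg : ∀ r ∈ Set.Icc 0 R, HasDerivAt g (g' r) r)
    (hg' : ∀ r ∈ Set.Icc 0 R, HasDerivAt g' (g'' r) r) (hg'' : ContinuousOn g'' (Set.Icc 0 R)) :
    ∫ r in (0)..R, taperedJetDeriv ρ R r (g r) (g' r) (g'' r) = -g 0 := by
  have add_ne_zero : ∀ r ∈ Set.Icc 0 R, ρ + r ≠ 0 := fun r hr ↦ by linarith [hr.1]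
  have continuousOn_g : ContinuousOn g (Set.Icc 0 R) := HasDerivAt.continuousOn hg
  have continuousOn_g' : ContinuousOn g' (Set.Icc 0 R) := HasDerivAt.continuousOn hg'
  have continuousOn_deriv : ContinuousOn
      (fun r ↦ taperedJetDeriv ρ R r (g r) (g' r) (g'' r)) (Set.Icc 0 R) := by
    unfold taperedJetDeriv quadraticCutoff harmonicTaper
    fun_prop (disch := assumption)
  have primitive : ∀ r ∈ Set.Icc 0 R, HasDerivAt
      (fun r ↦ quadraticCutoff R r • (g r - harmonicTaper ρ r • g' r))
      (taperedJetDeriv ρ R r (g r) (g' r) (g'' r)) r := fun r hr ↦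
    hasDerivAt_quadraticCutoff_smul_sub (add_ne_zero r hr) (hg r hr) (hg' r hr)
  rw [intervalIntegral.integral_eq_sub_of_hasDerivAt_of_le hR.le (HasDerivAt.continuousOn primitive)
    (fun r hr ↦ primitive r (Set.Ioo_subset_Icc_self hr))
    (continuousOn_deriv.intervalIntegrable_of_Icc hR.le)]
  simp [quadraticCutoff, harmonicTaper, hR.ne']

theorem sq_norm_apply_zero_le_integral [CompleteSpace F] {g g' g'' : ℝ → F} (hρ : 0 < ρ)
    (hρR : ρ ≤ R) (hg : ∀ r ∈ Set.Icc 0 R, HasDerivAt g (g' r) r)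
    (hg' : ∀ r ∈ Set.Icc 0 R, HasDerivAt g' (g'' r) r) (hg'' : ContinuousOn g'' (Set.Icc 0 R)) :
    ‖g 0‖ ^ 2 ≤ 21 * ∫ r in (0)..R,
      r ^ 2 * (‖g r‖ ^ 2 / R ^ 3 + ‖g' r‖ ^ 2 / ρ + ρ * ‖g'' r‖ ^ 2) := by
  have hR : 0 < R := hρ.trans_le hρR
  set energy : ℝ → ℝ := fun r ↦ r ^ 2 * (‖g r‖ ^ 2 / R ^ 3 + ‖g' r‖ ^ 2 / ρ + ρ * ‖g'' r‖ ^ 2)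
  have energy_nonneg : ∀ r, 0 ≤ energy r := fun r ↦ by positivity
  have continuousOn_energy : ContinuousOn energy (Set.Icc 0 R) := by
    have := HasDerivAt.continuousOn hg
    have := HasDerivAt.continuousOn hg'
    fun_prop
  calc ‖g 0‖ ^ 2 = ‖∫ r in (0)..R, taperedJetDeriv ρ R r (g r) (g' r) (g'' r)‖ ^ 2 := by
        rw [integral_taperedJetDeriv hρ hR hg hg' hg'', norm_neg]
    _ ≤ (∫ r in (0)..R, taperWeight ρ R r) * ∫ r in (0)..R, energy r := by
        simp only [intervalIntegral.integral_of_le hR.le]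
        refine sq_norm_integral_le_of_sq_norm_le_mul
          (intervalIntegrable_taperWeight hρ hR.le).1
          (continuousOn_energy.intervalIntegrable_of_Icc hR.le).1
          (.of_forall fun r ↦ taperWeight_nonneg hρ.le hR.le) (.of_forall energy_nonneg)
          ((ae_restrict_mem measurableSet_Ioc).mono fun r hr ↦ ?_)
        exact (pow_le_pow_left₀ (norm_nonneg _)
          (norm_taperedJetDeriv_le hρ hρR (Set.Ioc_subset_Icc_self hr) _ _ _) 2).trans
          (sq_mul_add_le_taperWeight_mul hρ hR _ _ _)
    _ ≤ 21 * ∫ r in (0)..R, energy r := by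
        gcongr
        · exact intervalIntegral.integral_nonneg hR.le fun r _ ↦ energy_nonneg r
        · exact integral_taperWeight_le hρ hR

end Radial

section Sobolev

variable {E F : Type*} [NormedAddCommGroup E] [NormedSpace ℝ E] [NormedAddCommGroup F]
  [NormedSpace ℝ F]

/-- The density of the Sobolev energy of `f` at the two scales `ρ ≤ R`: the value of `f` is measured
at the scale `R`, its first two derivatives at the scale `ρ`. The powers are those of dimension
three. -/
def jetEnergy (ρ R : ℝ) (f : E → F) (y : E) : ℝ :=
  ‖f y‖ ^ 2 / R ^ 3 + ‖fderiv ℝ f y‖ ^ 2 / ρ + ρ * ‖fderiv ℝ (fderiv ℝ f) y‖ ^ 2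

theorem continuous_norm_fderiv_fderiv {f : E → F} (hf : ContDiff ℝ 2 f) :
    Continuous fun y ↦ ‖fderiv ℝ (fderiv ℝ f) y‖ :=
  ((hf.fderiv_right (m := 1) (by norm_num)).continuous_fderiv (by norm_num)).norm

theorem continuous_jetEnergy (ρ R : ℝ) {f : E → F} (hf : ContDiff ℝ 2 f) :
    Continuous (jetEnergy ρ R f) :=
  (((hf.continuous.norm.pow 2).div_const _).add
    (((hf.continuous_fderiv (by norm_num)).norm.pow 2).div_const _)).add
    (((continuous_norm_fderiv_fderiv hf).pow 2).const_mul ρ)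

theorem sq_norm_le_integral_jetEnergy_ray [CompleteSpace F] {f : E → F} (hf : ContDiff ℝ 2 f)
    (x : E) {ω : E} (hω : ‖ω‖ = 1) {ρ R : ℝ} (hρ : 0 < ρ) (hρR : ρ ≤ R) :
    ‖f x‖ ^ 2 ≤ 21 * ∫ r in (0)..R, r ^ 2 * jetEnergy ρ R f (x + r • ω) := by
  have hR : 0 < R := hρ.trans_le hρR
  have hdf : ContDiff ℝ 1 (fderiv ℝ f) := hf.fderiv_right (by norm_num)
  have hasDerivAt_ray (r : ℝ) : HasDerivAt (fun r : ℝ ↦ x + r • ω) ω r := by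
    simpa using ((hasDerivAt_id r).smul_const ω).const_add x
  have hasDerivAt_f (r : ℝ) :
      HasDerivAt (fun r ↦ f (x + r • ω)) (fderiv ℝ f (x + r • ω) ω) r :=
    (hf.differentiable (by norm_num) _).hasFDerivAt.comp_hasDerivAt r (hasDerivAt_ray r)
  have hasDerivAt_df (r : ℝ) : HasDerivAt (fun r ↦ fderiv ℝ f (x + r • ω) ω)
      (fderiv ℝ (fderiv ℝ f) (x + r • ω) ω ω) r := by
    simpa using ((hdf.differentiable (by norm_num) _).hasFDerivAt.comp_hasDerivAt r
      (hasDerivAt_ray r)).clm_apply (hasDerivAt_const r ω)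
  have continuous_ddf : Continuous fun r : ℝ ↦ fderiv ℝ (fderiv ℝ f) (x + r • ω) ω ω := by
    fun_prop
  have continuous_energy := continuous_jetEnergy ρ R hf
  have radial := sq_norm_apply_zero_le_integral hρ hρR (fun r _ ↦ hasDerivAt_f r)
    (fun r _ ↦ hasDerivAt_df r) continuous_ddf.continuousOn
  simp only [zero_smul, add_zero] at radial
  refine radial.trans ?_
  gcongr
  refine intervalIntegral.integral_mono_on hR.le
    (Continuous.intervalIntegrable (by fun_prop) _ _)
    (Continuous.intervalIntegrable (by fun_prop) _ _) fun r _ ↦ ?_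
  unfold jetEnergy
  gcongr
  · exact (fderiv ℝ f _).unit_le_opNorm ω hω.le
  · exact ((fderiv ℝ (fderiv ℝ f) _ ω).unit_le_opNorm ω hω.le).trans
      ((fderiv ℝ (fderiv ℝ f) _).unit_le_opNorm ω hω.le)

theorem measureReal_ball_mul_sq_norm_le_integral_jetEnergy [CompleteSpace F] [MeasurableSpace E]
    [BorelSpace E] (μ : Measure E) [μ.IsAddHaarMeasure] (hE : Module.finrank ℝ E = 3) {f : E → F}
    (hf : ContDiff ℝ 2 f) (x : E) {ρ R : ℝ} (hρ : 0 < ρ) (hρR : ρ ≤ R) :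
    μ.real (Metric.ball 0 1) * ‖f x‖ ^ 2 ≤
      7 * ∫ y in Metric.closedBall x R, jetEnergy ρ R f y ∂μ := by
  have : FiniteDimensional ℝ E := .of_finrank_eq_succ hE
  have : Nontrivial E := Module.nontrivial_of_finrank_pos (R := ℝ) (by omega)
  have rays := le_integral_closedBall_of_le_integral_ray μ (x := x) (K := ‖f x‖ ^ 2 / 21)
    (continuous_jetEnergy ρ R hf) (hρ.le.trans hρR) fun ω hω ↦ by
      rw [div_le_iff₀' (by norm_num), hE]
      exact sq_norm_le_integral_jetEnergy_ray hf x hω hρ hρR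
  rw [hE] at rays
  push_cast at rays
  linarith

end Sobolev

section JapaneseBracket

theorem one_le_jb (s : ℝ) : 1 ≤ jb s :=
  Real.one_le_sqrt.2 (by linarith [sq_nonneg s])

theorem continuous_jb : Continuous jb := by
  unfold jb
  fun_prop

theorem jb_add_le (s r : ℝ) : jb (s + r) ≤ jb s + |r| := by
  have sq_jb : jb s ^ 2 = 1 + s ^ 2 := Real.sq_sqrt (by positivity)
  have abs_le_jb : |s| ≤ jb s := Real.abs_le_sqrt (by linarith)
  have mul_le : s * r ≤ jb s * |r| :=
    (le_abs_self _).trans (abs_mul s r ▸ by gcongr)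
  refine Real.sqrt_le_iff.2 ⟨by linarith [one_le_jb s, abs_nonneg r], ?_⟩
  linarith [add_sq (jb s) |r|, add_sq s r, sq_abs r]

theorem jb_le_two_mul_jb_sub {t r : ℝ} (hr : |r| ≤ jb t / 2) : jb t ≤ 2 * jb (t - r) := by
  have := jb_add_le (t - r) r
  rw [sub_add_cancel] at this
  linarith

end JapaneseBracket

section WeightedDecay

theorem sq_jb_mul_le_weighted {t ν : ℝ} (hν : |ν| ≤ jb t / 2) (a b c : ℝ) :
    jb t ^ 2 * (a ^ 2 / (jb t / 16) ^ 3 + b ^ 2 / (1 / 16) + 1 / 16 * c ^ 2) ≤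
      4096 * (a ^ 2 + jb (t - ν) ^ 2 * b ^ 2 + jb (t - ν) ^ 2 * c ^ 2) := by
  have one_le := one_le_jb t
  have sq_jb_le : jb t ^ 2 ≤ 4 * jb (t - ν) ^ 2 := by
    calc jb t ^ 2 ≤ (2 * jb (t - ν)) ^ 2 := by
          gcongr
          exact jb_le_two_mul_jb_sub hν
      _ = 4 * jb (t - ν) ^ 2 := by ring
  calc jb t ^ 2 * (a ^ 2 / (jb t / 16) ^ 3 + b ^ 2 / (1 / 16) + 1 / 16 * c ^ 2)
      = 4096 * (a ^ 2 / jb t) + jb t ^ 2 * (16 * b ^ 2 + c ^ 2 / 16) := by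
        field_simp
        ring
    _ ≤ 4096 * a ^ 2 + 4 * jb (t - ν) ^ 2 * (1024 * b ^ 2 + 1024 * c ^ 2) := by
        gcongr
        · exact div_le_self (sq_nonneg a) one_le
        · norm_num
        · linarith [sq_nonneg c]
    _ = _ := by ring

theorem sq_jb_mul_setIntegral_closedBall_le {E : Type*} [NormedAddCommGroup E] [ProperSpace E]
    [MeasurableSpace E] [BorelSpace E] (μ : Measure E) [IsFiniteMeasureOnCompacts μ]
    {a b c : E → ℝ} (ha : Continuous a) (hb : Continuous b) (hc : Continuous c) {t : ℝ} {x : E}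
    (hx : ‖x‖ ≤ jb t / 16) :
    jb t ^ 2 * ∫ y in Metric.closedBall x (jb t / 16),
        (a y ^ 2 / (jb t / 16) ^ 3 + b y ^ 2 / (1 / 16) + 1 / 16 * c y ^ 2) ∂μ ≤
      4096 * ((∫ y in Metric.closedBall 0 (jb t / 8), a y ^ 2 ∂μ) +
        (∫ y in Metric.closedBall 0 (jb t / 8), jb (t - ‖y‖) ^ 2 * b y ^ 2 ∂μ) +
        ∫ y in Metric.closedBall 0 (jb t / 8), jb (t - ‖y‖) ^ 2 * c y ^ 2 ∂μ) := by
  have one_le := one_le_jb t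
  have continuous_jb := continuous_jb
  have integrableOn_ball {u : E → ℝ} (hu : Continuous u) :
      IntegrableOn u (Metric.closedBall 0 (jb t / 8)) μ :=
    hu.continuousOn.integrableOn_compact (isCompact_closedBall _ _)
  have ball_subset : Metric.closedBall x (jb t / 16) ⊆ Metric.closedBall 0 (jb t / 8) :=
    Metric.closedBall_subset_closedBall' (by rw [dist_zero_right]; linarith)
  rw [← integral_add (integrableOn_ball (by fun_prop)) (integrableOn_ball (by fun_prop)),
    ← integral_add (integrableOn_ball (by fun_prop)) (integrableOn_ball (by fun_prop)),
    ← integral_const_mul, ← integral_const_mul]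
  refine (setIntegral_mono_set (integrableOn_ball (by fun_prop)) (.of_forall fun y ↦ ?_)
    ball_subset.eventuallyLE).trans (setIntegral_mono_on (integrableOn_ball (by fun_prop))
      (integrableOn_ball (by fun_prop)) measurableSet_closedBall fun y hy ↦ ?_)
  · simp only [Pi.zero_apply]
    positivity
  · rw [mem_closedBall_zero_iff] at hy
    exact sq_jb_mul_le_weighted (by rw [abs_norm]; linarith) _ _ _

theorem setOf_norm_le_eq_closedBall {E : Type*} [SeminormedAddCommGroup E] (R : ℝ) :
    {y : E | ‖y‖ ≤ R} = Metric.closedBall 0 R :=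
  Set.ext fun _ ↦ mem_closedBall_zero_iff.symm

theorem rpow_half_add_add_le {a b c : ℝ} (ha : 0 ≤ a) (hb : 0 ≤ b) (hc : 0 ≤ c) :
    (a + b + c) ^ ((1 : ℝ) / 2) ≤
      a ^ ((1 : ℝ) / 2) + b ^ ((1 : ℝ) / 2) + c ^ ((1 : ℝ) / 2) := by
  refine (Real.rpow_add_le_add_rpow (add_nonneg ha hb) hc (by norm_num) (by norm_num)).trans ?_
  gcongr
  exact Real.rpow_add_le_add_rpow ha hb (by norm_num) (by norm_num)

variable {E F : Type*} [NormedAddCommGroup F] [NormedSpace ℝ F] [CompleteSpace F]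

theorem exists_jb_mul_norm_le_of_finrank_eq_three [NormedAddCommGroup E] [NormedSpace ℝ E]
    [MeasurableSpace E] [BorelSpace E] (μ : Measure E) [μ.IsAddHaarMeasure]
    (hE : Module.finrank ℝ E = 3) :
    ∃ C > 0, ∀ t : ℝ, ∀ f : E → F, ContDiff ℝ 2 f → ∀ x : E, ‖x‖ ≤ jb t / 16 →
      jb t * ‖f x‖ ≤
        C * ((∫ y in {y : E | ‖y‖ ≤ jb t / 8}, ‖f y‖ ^ 2 ∂μ) ^ ((1 : ℝ) / 2)
          + (∫ y in {y : E | ‖y‖ ≤ jb t / 8},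
              jb (t - ‖y‖) ^ 2 * ‖fderiv ℝ f y‖ ^ 2 ∂μ) ^ ((1 : ℝ) / 2)
          + (∫ y in {y : E | ‖y‖ ≤ jb t / 8},
              jb (t - ‖y‖) ^ 2 * ‖fderiv ℝ (fderiv ℝ f) y‖ ^ 2 ∂μ) ^ ((1 : ℝ) / 2)) := by
  have : FiniteDimensional ℝ E := .of_finrank_eq_succ hE
  have : ProperSpace E := FiniteDimensional.proper_real E
  set m := μ.real (Metric.ball 0 1)
  have hm : 0 < m :=
    ENNReal.toReal_pos (Metric.measure_ball_pos μ 0 one_pos).ne' measure_ball_lt_top.ne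
  refine ⟨(7 * 4096 / m) ^ ((1 : ℝ) / 2), by positivity, fun t f hf x hx ↦ ?_⟩
  have one_le := one_le_jb t
  simp only [setOf_norm_le_eq_closedBall]
  have sobolev := measureReal_ball_mul_sq_norm_le_integral_jetEnergy μ hE hf x
    (ρ := 1 / 16) (R := jb t / 16) (by norm_num) (by linarith)
  simp only [jetEnergy] at sobolev
  have weights := sq_jb_mul_setIntegral_closedBall_le μ hf.continuous.norm
    (hf.continuous_fderiv (by norm_num)).norm (continuous_norm_fderiv_fderiv hf) hx
  set S := (∫ y in Metric.closedBall 0 (jb t / 8), ‖f y‖ ^ 2 ∂μ) + _ + _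
  calc jb t * ‖f x‖ = ((jb t * ‖f x‖) ^ 2) ^ ((1 : ℝ) / 2) := by
        rw [← Real.sqrt_eq_rpow, Real.sqrt_sq (by positivity)]
    _ ≤ (7 * 4096 / m * S) ^ ((1 : ℝ) / 2) := by
        gcongr
        rw [div_mul_eq_mul_div, le_div_iff₀' hm]
        linarith [mul_le_mul_of_nonneg_left sobolev (sq_nonneg (jb t))]
    _ = (7 * 4096 / m) ^ ((1 : ℝ) / 2) * S ^ ((1 : ℝ) / 2) :=
        Real.mul_rpow (by positivity) (by positivity)
    _ ≤ _ := by
        gcongr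
        exact rpow_half_add_add_le (by positivity) (by positivity) (by positivity)

theorem weighted_interior_decay_general [NormedAddCommGroup E] [InnerProductSpace ℝ E]
    [MeasurableSpace E] [BorelSpace E] (μ : Measure E) [μ.IsAddHaarMeasure]
    (b : OrthonormalBasis (Fin 3) ℝ E) :
    ∃ C > 0, ∀ t : ℝ, ∀ f : E → F, ContDiff ℝ 2 f → ∀ x : E, ‖x‖ ≤ jb t / 16 →
      jb t * ‖f x‖ ≤
        C * ((∫ y in {y : E | ‖y‖ ≤ jb t / 8}, ‖f y‖ ^ 2 ∂μ) ^ ((1 : ℝ) / 2)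
          + (∫ y in {y : E | ‖y‖ ≤ jb t / 8},
              jb (t - ‖y‖) ^ 2 * ∑ i, ‖fderiv ℝ f y (b i)‖ ^ 2 ∂μ) ^ ((1 : ℝ) / 2)
          + (∫ y in {y : E | ‖y‖ ≤ jb t / 8}, jb (t - ‖y‖) ^ 2 *
              ∑ i, ∑ j, ‖fderiv ℝ (fun z ↦ fderiv ℝ f z (b j)) y (b i)‖ ^ 2 ∂μ)
                ^ ((1 : ℝ) / 2)) := by
  have hE : Module.finrank ℝ E = 3 := by simpa using Module.finrank_eq_card_basis b.toBasis
  have : FiniteDimensional ℝ E := .of_finrank_eq_succ hE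
  have : ProperSpace E := FiniteDimensional.proper_real E
  obtain ⟨C, hC, decay⟩ := exists_jb_mul_norm_le_of_finrank_eq_three (F := F) μ hE
  refine ⟨C, hC, fun t f hf x hx ↦ (decay t f hf x hx).trans ?_⟩
  have continuous_jb := continuous_jb
  have setIntegral_jb_mul_mono {u v : E → ℝ} (hu : ∀ y, 0 ≤ u y) (hv : Continuous v)
      (huv : ∀ y, u y ≤ v y) :
      ∫ y in {y : E | ‖y‖ ≤ jb t / 8}, jb (t - ‖y‖) ^ 2 * u y ∂μ ≤
        ∫ y in {y : E | ‖y‖ ≤ jb t / 8}, jb (t - ‖y‖) ^ 2 * v y ∂μ := by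
    rw [setOf_norm_le_eq_closedBall]
    exact integral_mono_of_nonneg (.of_forall fun y ↦ mul_nonneg (sq_nonneg _) (hu y))
      ((Continuous.continuousOn (by fun_prop)).integrableOn_compact (isCompact_closedBall _ _))
      (.of_forall fun y ↦ mul_le_mul_of_nonneg_left (huv y) (sq_nonneg _))
  have hdf : ContDiff ℝ 1 (fderiv ℝ f) := hf.fderiv_right (by norm_num)
  have continuous_second (j : Fin 3) : Continuous (fderiv ℝ fun z ↦ fderiv ℝ f z (b j)) :=
    (hdf.clm_apply contDiff_const).continuous_fderiv (by norm_num)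
  gcongr _ * (_ + ?_ ^ _ + ?_ ^ _)
  · exact setIntegral_jb_mul_mono (fun y ↦ by positivity) (by fun_prop)
      fun y ↦ sq_opNorm_le_sum b (fderiv ℝ f y)
  · exact setIntegral_jb_mul_mono (fun y ↦ by positivity)
      (continuous_finsetSum _ fun i _ ↦ continuous_finsetSum _ fun j _ ↦
        ((continuous_second j).clm_apply continuous_const).norm.pow 2)
      fun y ↦ sq_norm_fderiv_fderiv_le_sum b hf y

end WeightedDecay

/-- there is a constant `C > 0`, independent of `t` and `f`, such that for every
`t ≥ 0` and every `f ∈ C_c^∞(ℝ³)`,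
`⟨t⟩ sup_{|x| ≤ ⟨t⟩/16} |f(x)| ≤ C (‖f‖_{L²(|x|≤⟨t⟩/8)} + ‖⟨t−r⟩∇f‖_{L²(|x|≤⟨t⟩/8)}
  + ‖⟨t−r⟩∇²f‖_{L²(|x|≤⟨t⟩/8)})`. -/
theorem weighted_interior_decay :
    ∃ C > 0, ∀ t : ℝ, 0 ≤ t → ∀ f : E3 → ℝ, ContDiff ℝ (⊤ : ℕ∞) f → HasCompactSupport f →
      ∀ x : E3, ‖x‖ ≤ jb t / 16 →
        jb t * |f x| ≤
          C * ((∫ y in {y : E3 | ‖y‖ ≤ jb t / 8}, (f y) ^ 2) ^ ((1 : ℝ) / 2)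
            + (∫ y in {y : E3 | ‖y‖ ≤ jb t / 8},
                (jb (t - ‖y‖)) ^ 2 * ∑ i, (pd i f y) ^ 2) ^ ((1 : ℝ) / 2)
            + (∫ y in {y : E3 | ‖y‖ ≤ jb t / 8},
                (jb (t - ‖y‖)) ^ 2 * ∑ i, ∑ j, (pd i (pd j f) y) ^ 2) ^ ((1 : ℝ) / 2)) := by
  obtain ⟨C, hC, decay⟩ := weighted_interior_decay_general (F := ℝ) (volume : Measure E3)
    (EuclideanSpace.basisFun (Fin 3) ℝ)
  simp only [Real.norm_eq_abs, sq_abs, EuclideanSpace.basisFun_apply] at decay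
  exact ⟨C, hC, fun t _ f hf _ ↦ decay t f (contDiff_infty.1 hf 2)⟩

end
end

section
/- There exists a constant C > 0 such that for every u ∈ C_c^∞(ℝ³; ℝ³) and every x ∈ ℝ³ with x ≠ 0: |x|^{1/2} |u(x)| ≤ C ( ‖∇u‖_{L²(ℝ³)} + Σ_{i=1}^{3} ‖∇(Ω̃_i u)‖_{L²(ℝ³)} ). -/
open MeasureTheory

noncomputable section

/-- Vector fields on `ℝ³`. -/
abbrev VF3 : Type := E3 → Fin 3 → ℝ

/-- The rotation generators `V¹ = e₂⊗e₃ − e₃⊗e₂`, `V² = e₃⊗e₁ − e₁⊗e₃`,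
`V³ = e₁⊗e₂ − e₂⊗e₁` (zero-based indexing). -/
def Vmat (i : Fin 3) : Matrix (Fin 3) (Fin 3) ℝ := fun j k =>
  if j = i + 1 ∧ k = i + 2 then 1 else if j = i + 2 ∧ k = i + 1 then -1 else 0

/-- The angular momentum operator `Ω_i` on scalar functions,
`Ω₁ = x₂∂₃ − x₃∂₂` etc. (zero-based, cyclic). -/
noncomputable def angOp (i : Fin 3) (u : E3 → ℝ) (x : E3) : ℝ :=
  x (i + 1) * pd (i + 2) u x - x (i + 2) * pd (i + 1) u x

/-- The modified angular momentum operator `Ω̃_i u = Ω_i u + V^i u` on vector fields. -/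
noncomputable def omtV (i : Fin 3) (u : VF3) : VF3 := fun x j =>
  angOp i (fun y => u y j) x + ∑ k, Vmat i j k * u x k

/-!
Integrating `∂ᵣ(v⁴)` along rays bounds `r² ∫_{S²} |v(rω)|⁴ dω` by `4 ∫ |v|³ |∇v|`, so by Hölder and
the Sobolev embedding `Ḣ¹ ⊂ L⁶` the trace `r^{1/2} ‖v(r ·)‖_{L⁴(S²)}` is controlled by `‖∇v‖_{L²}`.
Since `4 > 2 = dim S²`, Morrey's inequality on the sphere bounds `|f(x)|` by the `L⁴(S²)` norms of
`f(|x| ·)` and of its tangential gradient. The latter is dominated by the `Ω_i f`, so the trace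
estimate applies to `v = f` and `v = Ω_i f`. For a vector field, `Ω_i (u_j)` and `(Ω̃_i u)_j` differ
by a combination of components of `u`.
-/

open Module Set Metric
open scoped ENNReal NNReal Real

section RealAndLp

theorem sqrt_sum_sq_le_sum_abs {ι : Type*} [Fintype ι] (v : ι → ℝ) :
    √(∑ j, v j ^ 2) ≤ ∑ j, |v j| :=
  Real.sqrt_le_iff.2 ⟨Finset.sum_nonneg fun _ _ => abs_nonneg _, by
    simpa only [sq_abs] using Finset.sum_sq_le_sq_sum_of_nonneg fun j _ => abs_nonneg (v j)⟩

theorem le_two_mul_sin {ρ : ℝ} (h0 : 0 ≤ ρ) (h1 : ρ ≤ 1) : ρ ≤ 2 * Real.sin ρ := by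
  have hjordan := Real.mul_le_sin h0 (by linarith [Real.pi_gt_three])
  have hslope : 1 / 2 ≤ 2 / π := by
    rw [div_le_div_iff₀ two_pos Real.pi_pos]
    linarith [Real.pi_le_four]
  nlinarith

theorem lintegral_Ioo_zero_one_ofReal_rpow {s : ℝ} (hs : -1 < s) :
    ∫⁻ ρ in Ioo (0 : ℝ) 1, ENNReal.ofReal (ρ ^ s) = ENNReal.ofReal (1 / (s + 1)) := by
  rw [← ofReal_integral_eq_lintegral_ofReal
      ((intervalIntegral.integrableOn_Ioo_rpow_iff one_pos).2 hs)
      ((ae_restrict_mem measurableSet_Ioo).mono fun ρ hρ => Real.rpow_nonneg hρ.1.le s),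
    ← integral_Ioc_eq_integral_Ioo, ← intervalIntegral.integral_of_le zero_le_one,
    integral_rpow (.inl hs), Real.one_rpow, Real.zero_rpow (by linarith), sub_zero]

theorem lintegral_Ioo_zero_one_ofReal : ∫⁻ ρ in Ioo (0 : ℝ) 1, ENNReal.ofReal ρ = 2⁻¹ := by
  have := lintegral_Ioo_zero_one_ofReal_rpow (s := 1) (by norm_num)
  norm_num at this
  simpa using this

theorem eLpNorm_sum_norm_le {α ι G : Type*} [NormedAddCommGroup G] {m : MeasurableSpace α}
    {ν : Measure α} {p : ℝ≥0∞} (hp : 1 ≤ p) {s : Finset ι} {f : ι → α → G}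
    (hf : ∀ i ∈ s, AEStronglyMeasurable (f i) ν) :
    eLpNorm (fun a => ∑ i ∈ s, ‖f i a‖) p ν ≤ ∑ i ∈ s, eLpNorm (f i) p ν := by
  simp_rw [← eLpNorm_norm (f _)]
  convert eLpNorm_sum_le (fun i hi => (hf i hi).norm) hp using 2
  ext a
  simp only [Finset.sum_apply]

theorem eLpNorm_sub_sum_smul_le {α G ι : Type*} {m : MeasurableSpace α} [NormedAddCommGroup G]
    [NormedSpace ℝ G] [Fintype ι] {ν : Measure α} {p : ℝ≥0∞} (hp : 1 ≤ p) {g : α → G}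
    {f : ι → α → G} (c : ι → ℝ) (hg : AEStronglyMeasurable g ν)
    (hf : ∀ k, AEStronglyMeasurable (f k) ν) :
    eLpNorm (g - ∑ k, c k • f k) p ν ≤ eLpNorm g p ν + ∑ k, ‖c k‖ₑ * eLpNorm (f k) p ν := by
  have hcf : ∀ k ∈ Finset.univ, AEStronglyMeasurable (c k • f k) ν := fun k _ =>
    (hf k).const_smul _
  refine (eLpNorm_sub_le hg (Finset.aestronglyMeasurable_sum _ hcf) hp).trans ?_
  simp_rw [← eLpNorm_const_smul]
  gcongr
  exact eLpNorm_sum_le hcf hp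

theorem lintegral_enorm_pow_three_mul_le {α F G : Type*} [NormedAddCommGroup F]
    [NormedAddCommGroup G] {m : MeasurableSpace α} (ν : Measure α) {v : α → F} {w : α → G}
    (hv : AEStronglyMeasurable v ν) (hw : AEStronglyMeasurable w ν) :
    ∫⁻ y, ‖v y‖ₑ ^ 3 * ‖w y‖ₑ ∂ν ≤ eLpNorm v 6 ν ^ 3 * eLpNorm w 2 ν := by
  have hsix : (∫⁻ y, ‖v y‖ₑ ^ (6 : ℝ) ∂ν) ^ (1 / 2 : ℝ) = eLpNorm v 6 ν ^ 3 := by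
    rw [eLpNorm_eq_lintegral_rpow_enorm_toReal (by norm_num) (by norm_num), ← ENNReal.rpow_natCast,
      ← ENNReal.rpow_mul]
    norm_num
  have htwo : (∫⁻ y, ‖w y‖ₑ ^ (2 : ℝ) ∂ν) ^ (1 / 2 : ℝ) = eLpNorm w 2 ν := by
    simp [eLpNorm_eq_lintegral_rpow_enorm_toReal two_ne_zero ENNReal.ofNat_ne_top]
  have hcube : ∀ y, (‖v y‖ₑ ^ 3) ^ (2 : ℝ) = ‖v y‖ₑ ^ (6 : ℝ) := fun y => by
    rw [← ENNReal.rpow_natCast, ← ENNReal.rpow_mul]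
    norm_num
  have hholder := ENNReal.lintegral_mul_le_Lp_mul_Lq ν .two_two (hv.enorm.pow_const 3) hw.enorm
  simp_rw [hcube, hsix, htwo] at hholder
  exact hholder

theorem lintegral_rpow_le_lintegral_weight_rpow_mul {α : Type*} {m : MeasurableSpace α}
    {ν : Measure α} {p q : ℝ} (hpq : p.HolderConjugate q) {w g : α → ℝ≥0∞} (hw : AEMeasurable w ν)
    (hg : AEMeasurable g ν) (hw0 : ∀ᵐ a ∂ν, w a ≠ 0) (hwtop : ∀ᵐ a ∂ν, w a ≠ ∞) :
    (∫⁻ a, g a ∂ν) ^ p ≤ (∫⁻ a, w a ^ (-(q / p)) ∂ν) ^ (p / q) * ∫⁻ a, w a * g a ^ p ∂ν := by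
  have hp0 := hpq.pos
  have hsplit : g =ᵐ[ν] fun a => w a ^ (-(1 / p)) * (w a ^ (1 / p) * g a) := by
    filter_upwards [hw0, hwtop] with a h0 htop
    rw [← mul_assoc, ← ENNReal.rpow_add _ _ h0 htop, neg_add_cancel, ENNReal.rpow_zero, one_mul]
  have hweight : ∀ a, (w a ^ (-(1 / p))) ^ q = w a ^ (-(q / p)) := fun a => by
    rw [← ENNReal.rpow_mul, neg_mul, one_div_mul_eq_div]
  have hrest : ∀ a, (w a ^ (1 / p) * g a) ^ p = w a * g a ^ p := fun a => by
    rw [ENNReal.mul_rpow_of_nonneg _ _ hp0.le, ← ENNReal.rpow_mul, one_div_mul_cancel hp0.ne',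
      ENNReal.rpow_one]
  have hholder := ENNReal.lintegral_mul_le_Lp_mul_Lq ν hpq.symm (hw.pow_const (-(1 / p)))
    ((hw.pow_const (1 / p)).mul hg)
  simp only [Pi.mul_apply, hweight, hrest] at hholder
  calc (∫⁻ a, g a ∂ν) ^ p
      ≤ ((∫⁻ a, w a ^ (-(q / p)) ∂ν) ^ (1 / q) * (∫⁻ a, w a * g a ^ p ∂ν) ^ (1 / p)) ^ p := by
        rw [lintegral_congr_ae hsplit]
        gcongr
    _ = _ := by
        rw [ENNReal.mul_rpow_of_nonneg _ _ hp0.le, ← ENNReal.rpow_mul, ← ENNReal.rpow_mul,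
          one_div_mul_cancel hp0.ne', ENNReal.rpow_one, one_div_mul_eq_div]

end RealAndLp

section Polar

variable {E : Type*} [NormedAddCommGroup E] [NormedSpace ℝ E] [FiniteDimensional ℝ E]
  [Nontrivial E] [MeasurableSpace E] [BorelSpace E] (μ : Measure E) [μ.IsAddHaarMeasure]

theorem lintegral_toSphere_lintegral_Ioi {h : E → ℝ≥0∞} (hh : Measurable h) :
    ∫⁻ ω : sphere (0 : E) 1, (∫⁻ r in Ioi (0 : ℝ),
      ENNReal.ofReal (r ^ (finrank ℝ E - 1)) * h (r • (ω : E))) ∂μ.toSphere = ∫⁻ y, h y ∂μ := by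
  have hpolar : Measurable fun p : sphere (0 : E) 1 × Ioi (0 : ℝ) => h (p.2.1 • p.1.1) :=
    hh.comp (by fun_prop)
  symm
  calc ∫⁻ y, h y ∂μ
      = ∫⁻ y : ({0}ᶜ : Set E), h y ∂(μ.comap (↑)) := by
        rw [lintegral_subtype_comap (measurableSet_singleton _).compl, restrict_compl_singleton]
    _ = ∫⁻ p, h (p.2.1 • p.1.1) ∂μ.toSphere.prod (.volumeIoiPow (finrank ℝ E - 1)) := by
        rw [← μ.measurePreserving_homeomorphUnitSphereProd.lintegral_comp hpolar]
        refine lintegral_congr fun y => ?_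
        congr 1
        have := congrArg Subtype.val ((homeomorphUnitSphereProd E).symm_apply_apply y)
        rw [homeomorphUnitSphereProd_symm_apply_coe] at this
        exact this.symm
    _ = ∫⁻ ω : sphere (0 : E) 1, (∫⁻ r : Ioi (0 : ℝ), h (r.1 • (ω : E))
          ∂.volumeIoiPow (finrank ℝ E - 1)) ∂μ.toSphere := lintegral_prod _ hpolar.aemeasurable
    _ = _ := by
        refine lintegral_congr fun ω => ?_
        have hray : Measurable fun r : Ioi (0 : ℝ) => h (r.1 • (ω : E)) := hh.comp (by fun_prop)
        rw [Measure.volumeIoiPow, lintegral_withDensity_eq_lintegral_mul _ (by fun_prop) hray,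
          ← lintegral_subtype_comap measurableSet_Ioi]
        rfl

end Polar

section Trace

variable {E F : Type*} [NormedAddCommGroup E] [NormedSpace ℝ E]
  [NormedAddCommGroup F] [NormedSpace ℝ F]

theorem enorm_smul_le_lintegral_enorm_fderiv_ray {h : E → F} (hh : ContDiff ℝ 1 h)
    (hc : HasCompactSupport h) {e : E} (he : ‖e‖ = 1) {r : ℝ} (hr : 0 ≤ r) :
    ‖h (r • e)‖ₑ ≤ ∫⁻ s in Ioi r, ‖fderiv ℝ h (s • e)‖ₑ := by
  obtain ⟨M, hM⟩ := hc.isCompact.isBounded.exists_norm_le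
  set T := max r (M + 1)
  have hT : h (T • e) = 0 := by
    refine image_eq_zero_of_notMem_tsupport fun hmem => ?_
    have := hM _ hmem
    rw [norm_smul, he, mul_one, Real.norm_of_nonneg (hr.trans (le_max_left _ _))] at this
    linarith [le_max_right r (M + 1)]
  have hderiv : ∀ s : ℝ, deriv (fun s : ℝ => h (s • e)) s = fderiv ℝ h (s • e) e := fun s =>
    ((hh.differentiable one_ne_zero _).hasFDerivAt.comp_hasDerivAt s
      (by simpa using (hasDerivAt_id s).smul_const e)).deriv
  have hray : ContDiffOn ℝ 1 (fun s : ℝ => h (s • e)) (Icc r T) := by fun_prop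
  calc ‖h (r • e)‖ₑ = ‖h (T • e) - h (r • e)‖ₑ := by rw [hT, zero_sub, enorm_neg]
    _ ≤ ∫⁻ s in Icc r T, ‖deriv (fun s : ℝ => h (s • e)) s‖ₑ :=
        enorm_sub_le_lintegral_deriv_of_contDiffOn_Icc hray (le_max_left _ _)
    _ ≤ ∫⁻ s in Ici r, ‖fderiv ℝ h (s • e)‖ₑ := by
        refine (lintegral_mono fun s => ?_).trans (lintegral_mono_set Icc_subset_Ici_self)
        rw [hderiv, ← ofReal_norm, ← ofReal_norm]
        exact ENNReal.ofReal_le_ofReal ((ContinuousLinearMap.le_opNorm _ e).trans_eq (by simp [he]))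
    _ = ∫⁻ s in Ioi r, ‖fderiv ℝ h (s • e)‖ₑ := by rw [restrict_Ioi_eq_restrict_Ici]

theorem enorm_fderiv_pow {v : E → ℝ} {y : E} (hv : DifferentiableAt ℝ v y) (n : ℕ) :
    ‖fderiv ℝ (fun y => v y ^ n) y‖ₑ = n * (‖v y‖ₑ ^ (n - 1) * ‖fderiv ℝ v y‖ₑ) := by
  rw [(hv.hasFDerivAt.pow n).fderiv, enorm_smul]
  simp only [nsmul_eq_mul, enorm_mul, enorm_pow, mul_assoc, Real.enorm_natCast]

variable [FiniteDimensional ℝ E] [MeasurableSpace E] [BorelSpace E] (μ : Measure E)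
  [μ.IsAddHaarMeasure]

theorem lintegral_toSphere_enorm_smul_le [Nontrivial E] {h : E → F} (hh : ContDiff ℝ 1 h)
    (hc : HasCompactSupport h) {r : ℝ} (hr : 0 ≤ r) :
    ENNReal.ofReal (r ^ (finrank ℝ E - 1)) *
        ∫⁻ ω : sphere (0 : E) 1, ‖h (r • (ω : E))‖ₑ ∂μ.toSphere ≤
      ∫⁻ y, ‖fderiv ℝ h y‖ₑ ∂μ := by
  rw [← lintegral_toSphere_lintegral_Ioi μ (hh.continuous_fderiv one_ne_zero).enorm.measurable,
    ← lintegral_const_mul' _ _ ENNReal.ofReal_ne_top]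
  refine lintegral_mono fun ω => ?_
  calc ENNReal.ofReal (r ^ (finrank ℝ E - 1)) * ‖h (r • (ω : E))‖ₑ
      ≤ ENNReal.ofReal (r ^ (finrank ℝ E - 1)) * ∫⁻ s in Ioi r, ‖fderiv ℝ h (s • (ω : E))‖ₑ := by
        gcongr
        exact enorm_smul_le_lintegral_enorm_fderiv_ray hh hc (by simp) hr
    _ = ∫⁻ s in Ioi r, ENNReal.ofReal (r ^ (finrank ℝ E - 1)) * ‖fderiv ℝ h (s • (ω : E))‖ₑ :=
        (lintegral_const_mul' _ _ ENNReal.ofReal_ne_top).symm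
    _ ≤ ∫⁻ s in Ioi r, ENNReal.ofReal (s ^ (finrank ℝ E - 1)) * ‖fderiv ℝ h (s • (ω : E))‖ₑ := by
        refine setLIntegral_mono' measurableSet_Ioi fun s hs => ?_
        have : r ≤ s := le_of_lt hs
        gcongr
    _ ≤ _ := lintegral_mono_set (Ioi_subset_Ioi hr)

theorem exists_eLpNorm_six_le_eLpNorm_fderiv (hE : finrank ℝ E = 3) :
    ∃ C : ℝ≥0, ∀ v : E → ℝ, ContDiff ℝ 1 v → HasCompactSupport v →
      eLpNorm v 6 μ ≤ C * eLpNorm (fderiv ℝ v) 2 μ :=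
  ⟨_, fun v hv hc => by
    exact_mod_cast eLpNorm_le_eLpNorm_fderiv_of_eq μ hv hc (p := 2) (p' := 6) one_le_two (by lia)
      (by norm_num [hE])⟩

theorem exists_sq_mul_lintegral_toSphere_enorm_pow_four_le (hE : finrank ℝ E = 3) :
    ∃ C : ℝ≥0, ∀ v : E → ℝ, ContDiff ℝ 1 v → HasCompactSupport v → ∀ r : ℝ, 0 ≤ r →
      ENNReal.ofReal r ^ 2 * ∫⁻ ω : sphere (0 : E) 1, ‖v (r • (ω : E))‖ₑ ^ 4 ∂μ.toSphere ≤
        C * eLpNorm (fderiv ℝ v) 2 μ ^ 4 := by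
  obtain ⟨K, hK⟩ := exists_eLpNorm_six_le_eLpNorm_fderiv μ hE
  have : Nontrivial E := Module.nontrivial_of_finrank_pos (R := ℝ) (by lia)
  refine ⟨4 * K ^ 3, fun v hv hc r hr => ?_⟩
  set D := eLpNorm (fderiv ℝ v) 2 μ
  calc _ ≤ ∫⁻ y, ‖fderiv ℝ (fun y => v y ^ 4) y‖ₑ ∂μ := by
        have htrace := lintegral_toSphere_enorm_smul_le μ (hv.pow 4)
          (hc.comp_left (g := (· ^ 4)) (by simp)) hr
        simpa [hE, ENNReal.ofReal_pow hr, enorm_pow] using htrace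
    _ = 4 * ∫⁻ y, ‖v y‖ₑ ^ 3 * ‖fderiv ℝ v y‖ₑ ∂μ := by
        rw [← lintegral_const_mul' _ _ (by simp)]
        exact lintegral_congr fun y => by
          simpa using enorm_fderiv_pow (hv.differentiable one_ne_zero y) 4
    _ ≤ 4 * (eLpNorm v 6 μ ^ 3 * D) := by
        gcongr
        exact lintegral_enorm_pow_three_mul_le μ hv.continuous.aestronglyMeasurable
          (hv.continuous_fderiv one_ne_zero).aestronglyMeasurable
    _ ≤ 4 * ((K * D) ^ 3 * D) := by gcongr; exact hK v hv hc
    _ = _ := by push_cast; ring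

theorem exists_sqrt_mul_eLpNorm_toSphere_four_le (hE : finrank ℝ E = 3) :
    ∃ C : ℝ≥0, ∀ v : E → ℝ, ContDiff ℝ 1 v → HasCompactSupport v → ∀ r : ℝ, 0 ≤ r →
      ENNReal.ofReal r ^ (1 / 2 : ℝ) *
          eLpNorm (fun ω : sphere (0 : E) 1 => v (r • (ω : E))) 4 μ.toSphere ≤
        C * eLpNorm (fderiv ℝ v) 2 μ := by
  obtain ⟨K, hK⟩ := exists_sq_mul_lintegral_toSphere_enorm_pow_four_le μ hE
  refine ⟨K ^ (1 / 4 : ℝ), fun v hv hc r hr => ?_⟩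
  have hnorm : eLpNorm (fun ω : sphere (0 : E) 1 => v (r • (ω : E))) 4 μ.toSphere
      = (∫⁻ ω : sphere (0 : E) 1, ‖v (r • (ω : E))‖ₑ ^ 4 ∂μ.toSphere) ^ (1 / 4 : ℝ) := by
    rw [eLpNorm_eq_lintegral_rpow_enorm_toReal (by norm_num) (by norm_num)]
    norm_num
  calc _ = (ENNReal.ofReal r ^ 2 *
          ∫⁻ ω : sphere (0 : E) 1, ‖v (r • (ω : E))‖ₑ ^ 4 ∂μ.toSphere) ^ (1 / 4 : ℝ) := by
        rw [hnorm, ENNReal.mul_rpow_of_nonneg _ _ (by norm_num), ← ENNReal.rpow_natCast,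
          ← ENNReal.rpow_mul]
        norm_num
    _ ≤ (K * eLpNorm (fderiv ℝ v) 2 μ ^ 4) ^ (1 / 4 : ℝ) :=
        ENNReal.rpow_le_rpow (hK v hv hc r hr) (by norm_num)
    _ = _ := by
        rw [ENNReal.mul_rpow_of_nonneg _ _ (by norm_num), ← ENNReal.rpow_natCast (eLpNorm _ _ _),
          ← ENNReal.rpow_mul, ENNReal.coe_rpow_of_nonneg _ (by norm_num)]
        norm_num

end Trace

section SphericalCoordinates

theorem lintegral_prod_eq_lintegral_polar {k : ℝ × ℝ → ℝ≥0∞} (hk : Measurable k) :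
    ∫⁻ p, k p = ∫⁻ θ in Ioo (-π) π, ∫⁻ q in Ioi (0 : ℝ),
      ENNReal.ofReal q * k (q * Real.cos θ, q * Real.sin θ) := by
  rw [← lintegral_comp_polarCoord_symm, polarCoord_target, Measure.volume_eq_prod,
    ← Measure.prod_restrict, lintegral_prod_symm]
  · simp only [polarCoord_symm_apply, smul_eq_mul]
  · simp only [polarCoord_symm_apply, smul_eq_mul]
    fun_prop

theorem lintegral_lintegral_Ioi_eq_lintegral_polar {k : ℝ × ℝ → ℝ≥0∞} (hk : Measurable k) :
    ∫⁻ a, ∫⁻ q in Ioi (0 : ℝ), k (a, q) = ∫⁻ ρ in Ioo 0 π, ∫⁻ r in Ioi (0 : ℝ),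
      ENNReal.ofReal r * k (r * Real.cos ρ, r * Real.sin ρ) := by
  set k' : ℝ × ℝ → ℝ≥0∞ := (Prod.snd ⁻¹' Ioi 0).indicator k
  have hk' : Measurable k' := hk.indicator (measurable_snd measurableSet_Ioi)
  calc ∫⁻ a, ∫⁻ q in Ioi (0 : ℝ), k (a, q)
      = ∫⁻ p, k' p := by
        rw [Measure.volume_eq_prod, lintegral_prod _ hk'.aemeasurable]
        simp_rw [← lintegral_indicator measurableSet_Ioi]
        rfl
    _ = ∫⁻ ρ in Ioo (-π) π, ∫⁻ r in Ioi (0 : ℝ),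
          ENNReal.ofReal r * k' (r * Real.cos ρ, r * Real.sin ρ) :=
        lintegral_prod_eq_lintegral_polar hk'
    _ = ∫⁻ ρ in Ioo (-π) π, (Ioo 0 π).indicator (fun ρ => ∫⁻ r in Ioi (0 : ℝ),
          ENNReal.ofReal r * k (r * Real.cos ρ, r * Real.sin ρ)) ρ := by
        refine setLIntegral_congr_fun measurableSet_Ioo fun ρ hρ => ?_
        by_cases hpos : 0 < ρ
        · rw [indicator_of_mem (mem_Ioo.2 ⟨hpos, hρ.2⟩)]
          refine setLIntegral_congr_fun measurableSet_Ioi fun r hr => ?_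
          have hsin : 0 < r * Real.sin ρ := mul_pos hr (Real.sin_pos_of_pos_of_lt_pi hpos hρ.2)
          simp only [k', indicator, mem_preimage, mem_Ioi, hsin, if_true]
        · rw [indicator_of_notMem fun hmem => hpos hmem.1]
          refine setLIntegral_eq_zero measurableSet_Ioi fun r hr => ?_
          have hsin : ¬ 0 < r * Real.sin ρ := not_lt.2 <| mul_nonpos_of_nonneg_of_nonpos
            (le_of_lt hr) (Real.sin_nonpos_of_nonpos_of_neg_pi_le (not_lt.1 hpos) hρ.1.le)
          simp only [k', indicator, mem_preimage, mem_Ioi, hsin, if_false, mul_zero, Pi.zero_apply]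
    _ = _ := by
        rw [lintegral_indicator measurableSet_Ioo, Measure.restrict_restrict measurableSet_Ioo,
          inter_eq_left.2 (Ioo_subset_Ioo_left (by linarith [Real.pi_pos]))]

variable {E : Type*} [NormedAddCommGroup E] [InnerProductSpace ℝ E]

/-- The point of the unit sphere with polar angle `ρ`, measured from `b 0`, and azimuth `θ`,
measured from `b 1`. The curves `ρ ↦ sphericalPoint b ρ θ` are the meridians from the pole `b 0`. -/
def sphericalPoint (b : OrthonormalBasis (Fin 3) ℝ E) (ρ θ : ℝ) : E :=
  Real.cos ρ • b 0 + Real.sin ρ • (Real.cos θ • b 1 + Real.sin θ • b 2)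

theorem inner_sphericalPoint (b : OrthonormalBasis (Fin 3) ℝ E) (ρ ρ' θ : ℝ) :
    inner ℝ (sphericalPoint b ρ θ) (sphericalPoint b ρ' θ) = Real.cos (ρ - ρ') := by
  have hb : ∀ i j, inner ℝ (b i) (b j) = if i = j then (1 : ℝ) else 0 := b.inner_eq_ite
  simp only [sphericalPoint, inner_add_left, inner_add_right, real_inner_smul_left,
    real_inner_smul_right, hb, Real.cos_sub, Fin.reduceEq, if_true, if_false]
  linear_combination Real.sin ρ * Real.sin ρ' * Real.sin_sq_add_cos_sq θ

theorem norm_sphericalPoint (b : OrthonormalBasis (Fin 3) ℝ E) (ρ θ : ℝ) :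
    ‖sphericalPoint b ρ θ‖ = 1 := by
  rw [norm_eq_sqrt_real_inner, inner_sphericalPoint, sub_self, Real.cos_zero, Real.sqrt_one]

theorem sphericalPoint_zero (b : OrthonormalBasis (Fin 3) ℝ E) (θ : ℝ) :
    sphericalPoint b 0 θ = b 0 := by
  simp [sphericalPoint]

theorem hasDerivAt_sphericalPoint (b : OrthonormalBasis (Fin 3) ℝ E) (ρ θ : ℝ) :
    HasDerivAt (fun ρ => sphericalPoint b ρ θ) (sphericalPoint b (ρ + π / 2) θ) ρ := by
  rw [sphericalPoint, Real.cos_add_pi_div_two, Real.sin_add_pi_div_two]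
  exact ((Real.hasDerivAt_cos ρ).smul_const _).add ((Real.hasDerivAt_sin ρ).smul_const _)

theorem exists_orthonormalBasis_zero_eq (hE : finrank ℝ E = 3) {e : E} (he : ‖e‖ = 1) :
    ∃ b : OrthonormalBasis (Fin 3) ℝ E, b 0 = e := by
  have : FiniteDimensional ℝ E := FiniteDimensional.of_finrank_pos (by lia)
  have hv : Orthonormal ℝ (({0} : Set (Fin 3)).domRestrict fun _ => e) :=
    ⟨fun _ => he, fun i j hij => absurd (Subsingleton.elim i j) hij⟩
  obtain ⟨b, hb⟩ := hv.exists_orthonormalBasis_extension_of_card_eq (by simp [hE])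
  exact ⟨b, hb 0 rfl⟩

variable [FiniteDimensional ℝ E] [MeasurableSpace E] [BorelSpace E]

theorem lintegral_eq_lintegral_orthonormalBasis_fin_three (b : OrthonormalBasis (Fin 3) ℝ E)
    {h : E → ℝ≥0∞} (hh : Measurable h) :
    ∫⁻ y, h y = ∫⁻ a : ℝ, ∫⁻ p : ℝ × ℝ, h (a • b 0 + (p.1 • b 1 + p.2 • b 2)) := by
  have hsymm : ∀ x : Fin 3 → ℝ, b.repr.symm (WithLp.toLp 2 x)
      = x 0 • b 0 + (x 1 • b 1 + x 2 • b 2) := fun x => by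
    simp [← b.sum_repr_symm, Fin.sum_univ_three, add_assoc]
  rw [← b.measurePreserving_repr_symm.lintegral_comp hh,
    ← (PiLp.volume_preserving_toLp (Fin 3)).lintegral_comp (by fun_prop)]
  simp_rw [hsymm]
  rw [← (volume_preserving_piFinSuccAbove (fun _ : Fin 3 => ℝ) 0).symm.lintegral_comp
    (by fun_prop), Measure.volume_eq_prod, lintegral_prod _ (by fun_prop)]
  refine lintegral_congr fun a => ?_
  rw [← (volume_preserving_finTwoArrow ℝ).symm.lintegral_comp (by fun_prop)]
  simp [MeasurableEquiv.piFinSuccAbove, MeasurableEquiv.finTwoArrow, Fin.insertNthEquiv]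

theorem lintegral_eq_lintegral_spherical (b : OrthonormalBasis (Fin 3) ℝ E)
    {h : E → ℝ≥0∞} (hh : Measurable h) :
    ∫⁻ y, h y = ∫⁻ θ in Ioo (-π) π, ∫⁻ ρ in Ioo 0 π,
      ENNReal.ofReal (Real.sin ρ) *
        ∫⁻ r in Ioi (0 : ℝ), ENNReal.ofReal (r ^ 2) * h (r • sphericalPoint b ρ θ) := by
  calc ∫⁻ y, h y
      = ∫⁻ a : ℝ, ∫⁻ θ in Ioo (-π) π, ∫⁻ q in Ioi (0 : ℝ), ENNReal.ofReal q *
          h (a • b 0 + ((q * Real.cos θ) • b 1 + (q * Real.sin θ) • b 2)) := by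
        rw [lintegral_eq_lintegral_orthonormalBasis_fin_three b hh]
        refine lintegral_congr fun a => lintegral_prod_eq_lintegral_polar (by fun_prop)
    _ = ∫⁻ θ in Ioo (-π) π, ∫⁻ a : ℝ, ∫⁻ q in Ioi (0 : ℝ), ENNReal.ofReal q *
          h (a • b 0 + ((q * Real.cos θ) • b 1 + (q * Real.sin θ) • b 2)) := by
        refine lintegral_lintegral_swap (Measurable.aemeasurable ?_)
        refine Measurable.lintegral_prod_right' (f := fun p : (ℝ × ℝ) × ℝ => ENNReal.ofReal p.2 *
          h (p.1.1 • b 0 + ((p.2 * Real.cos p.1.2) • b 1 + (p.2 * Real.sin p.1.2) • b 2))) ?_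
        fun_prop
    _ = _ := by
        refine lintegral_congr fun θ => ?_
        rw [lintegral_lintegral_Ioi_eq_lintegral_polar (k := fun p : ℝ × ℝ => ENNReal.ofReal p.2 *
          h (p.1 • b 0 + ((p.2 * Real.cos θ) • b 1 + (p.2 * Real.sin θ) • b 2))) (by fun_prop)]
        refine setLIntegral_congr_fun measurableSet_Ioo fun ρ _ => ?_
        dsimp only
        rw [← lintegral_const_mul' _ _ ENNReal.ofReal_ne_top]
        refine setLIntegral_congr_fun measurableSet_Ioi fun r hr => ?_
        have hr : 0 ≤ r := le_of_lt hr
        simp only [← mul_assoc, ENNReal.ofReal_mul hr, ENNReal.ofReal_pow hr, sphericalPoint,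
          smul_add, smul_smul]
        ring

theorem lintegral_toSphere_eq_lintegral_spherical (b : OrthonormalBasis (Fin 3) ℝ E)
    {g : E → ℝ≥0∞} (hg : Measurable g) :
    ∫⁻ ω : sphere (0 : E) 1, g ω ∂(volume : Measure E).toSphere =
      ∫⁻ θ in Ioo (-π) π, ∫⁻ ρ in Ioo 0 π,
        ENNReal.ofReal (Real.sin ρ) * g (sphericalPoint b ρ θ) := by
  have hE : finrank ℝ E = 3 := by simpa using finrank_eq_card_basis b.toBasis
  have : Nontrivial E := Module.nontrivial_of_finrank_pos (R := ℝ) (by lia)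
  set h : E → ℝ≥0∞ := (ball 0 1).indicator fun y => g (‖y‖⁻¹ • y)
  have hh : Measurable h := Measurable.indicator (by fun_prop) measurableSet_ball
  have hradial : ∀ e : E, ‖e‖ = 1 →
      ∫⁻ r in Ioi (0 : ℝ), ENNReal.ofReal (r ^ 2) * h (r • e) = ENNReal.ofReal (1 / 3) * g e := by
    intro e he
    calc ∫⁻ r in Ioi (0 : ℝ), ENNReal.ofReal (r ^ 2) * h (r • e)
        = ∫⁻ r in Ioi (0 : ℝ),
            (Iio 1).indicator (fun r => ENNReal.ofReal (r ^ (2 : ℝ)) * g e) r := by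
          refine setLIntegral_congr_fun measurableSet_Ioi fun r (hr : 0 < r) => ?_
          by_cases hr1 : r < 1 <;>
            simp [h, indicator, norm_smul, he, abs_of_pos hr, hr1, smul_smul, hr.ne']
      _ = ENNReal.ofReal (1 / 3) * g e := by
          rw [setLIntegral_indicator measurableSet_Iio, Iio_inter_Ioi,
            lintegral_mul_const _ (by fun_prop),
            lintegral_Ioo_zero_one_ofReal_rpow (by norm_num)]
          norm_num
  have key := (lintegral_toSphere_lintegral_Ioi volume hh).trans
    (lintegral_eq_lintegral_spherical b hh)
  simp only [hE, Nat.add_one_sub_one, hradial _ (norm_sphericalPoint b _ _),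
    hradial _ (norm_eq_of_mem_sphere _), mul_left_comm _ (ENNReal.ofReal (1 / 3))] at key
  simp only [lintegral_const_mul' _ _ ENNReal.ofReal_ne_top] at key
  exact (ENNReal.mul_right_inj (by simp) ENNReal.ofReal_ne_top).1 key

end SphericalCoordinates

section Morrey

theorem exists_lintegral_Ioo_rpow_le {p : ℝ} (hp : 2 < p) :
    ∃ K : ℝ≥0, ∀ g : ℝ → ℝ≥0∞, Measurable g →
      (∫⁻ ρ in Ioo (0 : ℝ) 1, g ρ) ^ p ≤
        K * ∫⁻ ρ in Ioo (0 : ℝ) 1, ENNReal.ofReal ρ * g ρ ^ p := by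
  have hpq := Real.HolderConjugate.conjExponent (by linarith : 1 < p)
  set q := p.conjExponent
  have hq : -1 < -(q / p) := by
    have hqp : q < p := (div_lt_self hpq.pos (by linarith) : p / (p - 1) < p)
    rwa [neg_lt_neg_iff, div_lt_one hpq.pos]
  have hweight : ∫⁻ ρ in Ioo (0 : ℝ) 1, ENNReal.ofReal ρ ^ (-(q / p)) ≠ ∞ := by
    rw [setLIntegral_congr_fun measurableSet_Ioo fun ρ hρ => ENNReal.ofReal_rpow_of_pos hρ.1,
      lintegral_Ioo_zero_one_ofReal_rpow hq]
    exact ENNReal.ofReal_ne_top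
  lift (∫⁻ ρ in Ioo (0 : ℝ) 1, ENNReal.ofReal ρ ^ (-(q / p))) ^ (p / q) to ℝ≥0
    using ENNReal.rpow_ne_top_of_nonneg (div_nonneg hpq.nonneg hpq.symm.nonneg) hweight
    with K hK
  refine ⟨K, fun g hg => hK ▸ ?_⟩
  refine lintegral_rpow_le_lintegral_weight_rpow_mul hpq (by fun_prop) hg.aemeasurable ?_
    (.of_forall fun _ => ENNReal.ofReal_ne_top)
  filter_upwards [ae_restrict_mem measurableSet_Ioo] with ρ hρ
  exact (ENNReal.ofReal_pos.2 hρ.1).ne'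

variable {F : Type*} [NormedAddCommGroup F] [NormedSpace ℝ F]

theorem enorm_zero_rpow_le_add_lintegral_enorm_deriv_rpow {p : ℝ} (hp : 1 ≤ p) {φ : ℝ → F}
    (hφ : ContDiff ℝ 1 φ) {ρ : ℝ} (hρ : ρ ∈ Ioo (0 : ℝ) 1) :
    ‖φ 0‖ₑ ^ p ≤
      2 ^ (p - 1) * (‖φ ρ‖ₑ ^ p + (∫⁻ s in Ioo (0 : ℝ) 1, ‖deriv φ s‖ₑ) ^ p) := by
  have hftc : ‖φ ρ - φ 0‖ₑ ≤ ∫⁻ s in Ioo (0 : ℝ) 1, ‖deriv φ s‖ₑ :=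
    (enorm_sub_le_lintegral_deriv_of_contDiffOn_Icc hφ.contDiffOn hρ.1.le).trans <| by
      rw [← restrict_Ioo_eq_restrict_Icc]
      exact lintegral_mono_set (Ioo_subset_Ioo_right hρ.2.le)
  refine le_trans ?_ (ENNReal.rpow_add_le_mul_rpow_add_rpow _ _ hp)
  gcongr
  calc ‖φ 0‖ₑ = ‖φ ρ - (φ ρ - φ 0)‖ₑ := by rw [sub_sub_cancel]
    _ ≤ ‖φ ρ‖ₑ + ‖φ ρ - φ 0‖ₑ := enorm_sub_le
    _ ≤ _ := by gcongr

theorem exists_enorm_zero_rpow_le_lintegral {p : ℝ} (hp : 2 < p) :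
    ∃ C : ℝ≥0, ∀ φ : ℝ → F, ContDiff ℝ 1 φ →
      ‖φ 0‖ₑ ^ p ≤ C * ∫⁻ ρ in Ioo (0 : ℝ) 1,
        ENNReal.ofReal ρ * (‖φ ρ‖ₑ ^ p + ‖deriv φ ρ‖ₑ ^ p) := by
  obtain ⟨K, hK⟩ := exists_lintegral_Ioo_rpow_le hp
  have hp1 : 1 ≤ p := by linarith
  refine ⟨2 * 2 ^ (p - 1) * (1 + K), fun φ hφ => ?_⟩
  have hφm : Measurable fun ρ => ‖φ ρ‖ₑ := hφ.continuous.enorm.measurable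
  have hφ'm : Measurable fun ρ => ‖deriv φ ρ‖ₑ := (hφ.continuous_deriv le_rfl).enorm.measurable
  set D := ∫⁻ ρ in Ioo (0 : ℝ) 1, ‖deriv φ ρ‖ₑ
  set I := ∫⁻ ρ in Ioo (0 : ℝ) 1, ENNReal.ofReal ρ * (‖φ ρ‖ₑ ^ p + ‖deriv φ ρ‖ₑ ^ p)
  calc ‖φ 0‖ₑ ^ p = 2 * ∫⁻ ρ in Ioo (0 : ℝ) 1, ENNReal.ofReal ρ * ‖φ 0‖ₑ ^ p := by
        rw [lintegral_mul_const _ (by fun_prop), lintegral_Ioo_zero_one_ofReal, ← mul_assoc,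
          ENNReal.mul_inv_cancel two_ne_zero ENNReal.ofNat_ne_top, one_mul]
    _ ≤ 2 * ∫⁻ ρ in Ioo (0 : ℝ) 1, 2 ^ (p - 1) *
          (ENNReal.ofReal ρ * ‖φ ρ‖ₑ ^ p + ENNReal.ofReal ρ * D ^ p) := by
        gcongr 2 * ?_
        refine setLIntegral_mono' measurableSet_Ioo fun ρ hρ => ?_
        rw [← mul_add, mul_left_comm]
        gcongr
        exact enorm_zero_rpow_le_add_lintegral_enorm_deriv_rpow hp1 hφ hρ
    _ = 2 * 2 ^ (p - 1) * ((∫⁻ ρ in Ioo (0 : ℝ) 1, ENNReal.ofReal ρ * ‖φ ρ‖ₑ ^ p) +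
          2⁻¹ * D ^ p) := by
        rw [lintegral_const_mul _ (by fun_prop), lintegral_add_left (by fun_prop),
          lintegral_mul_const _ (by fun_prop), lintegral_Ioo_zero_one_ofReal, mul_assoc]
    _ ≤ 2 * 2 ^ (p - 1) * (I + 1 * (K * I)) := by
        gcongr
        · exact lintegral_mono fun ρ => by gcongr; exact le_self_add
        · exact ENNReal.inv_le_one.2 one_le_two
        · refine (hK _ hφ'm).trans ?_
          gcongr
          exact lintegral_mono fun ρ => by gcongr; exact le_add_self
    _ = _ := by
        push_cast
        rw [ENNReal.coe_rpow_of_nonneg _ (by linarith)]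
        push_cast
        ring

variable {E : Type*} [NormedAddCommGroup E] [InnerProductSpace ℝ E]

theorem norm_deriv_comp_sphericalPoint_le {f : E → F} {g : E → ℝ} (hf : Differentiable ℝ f)
    (hg : ∀ y w, inner ℝ y w = 0 → ‖w‖ = ‖y‖ → ‖fderiv ℝ f y w‖ ≤ g y)
    (b : OrthonormalBasis (Fin 3) ℝ E) (r ρ θ : ℝ) :
    ‖deriv (fun ρ => f (r • sphericalPoint b ρ θ)) ρ‖ ≤ g (r • sphericalPoint b ρ θ) := by
  have hchain : HasDerivAt (fun ρ => f (r • sphericalPoint b ρ θ)) _ ρ :=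
    (hf _).hasFDerivAt.comp_hasDerivAt ρ ((hasDerivAt_sphericalPoint b ρ θ).const_smul r)
  rw [hchain.deriv]
  refine hg _ _ ?_ (by simp [norm_smul, norm_sphericalPoint])
  simp [real_inner_smul_left, real_inner_smul_right, inner_sphericalPoint]

theorem exists_enorm_rpow_le_lintegral_meridian {p : ℝ} (hp : 2 < p) :
    ∃ C : ℝ≥0, ∀ (f : E → F) (g : E → ℝ), ContDiff ℝ 1 f →
      (∀ y w, inner ℝ y w = 0 → ‖w‖ = ‖y‖ → ‖fderiv ℝ f y w‖ ≤ g y) →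
      ∀ (b : OrthonormalBasis (Fin 3) ℝ E) (r θ : ℝ),
        ‖f (r • b 0)‖ₑ ^ p ≤ C * ∫⁻ ρ in Ioo (0 : ℝ) 1, ENNReal.ofReal ρ *
          (‖f (r • sphericalPoint b ρ θ)‖ₑ ^ p + ‖g (r • sphericalPoint b ρ θ)‖ₑ ^ p) := by
  obtain ⟨C, hC⟩ := exists_enorm_zero_rpow_le_lintegral (F := F) hp
  refine ⟨C, fun f g hf htan b r θ => ?_⟩
  have hφ : ContDiff ℝ 1 fun ρ => f (r • sphericalPoint b ρ θ) := by
    unfold sphericalPoint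
    fun_prop
  have hmorrey := hC _ hφ
  simp only [sphericalPoint_zero] at hmorrey
  refine hmorrey.trans ?_
  gcongr C * ?_
  refine lintegral_mono fun ρ => ?_
  gcongr ENNReal.ofReal ρ * ?_
  refine add_le_add le_rfl (ENNReal.rpow_le_rpow ?_ (by linarith))
  exact enorm_le_iff_norm_le.2 ((norm_deriv_comp_sphericalPoint_le (hf.differentiable one_ne_zero)
    htan b r ρ θ).trans (Real.le_norm_self _))

variable [FiniteDimensional ℝ E] [MeasurableSpace E] [BorelSpace E]

theorem lintegral_lintegral_Ioo_zero_one_le (b : OrthonormalBasis (Fin 3) ℝ E)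
    {g : E → ℝ≥0∞} (hg : Measurable g) :
    ∫⁻ θ in Ioo (-π) π, ∫⁻ ρ in Ioo (0 : ℝ) 1,
        ENNReal.ofReal ρ * g (sphericalPoint b ρ θ) ≤
      2 * ∫⁻ ω : sphere (0 : E) 1, g ω ∂(volume : Measure E).toSphere := by
  rw [lintegral_toSphere_eq_lintegral_spherical b hg, ← lintegral_const_mul' _ _ (by simp)]
  refine lintegral_mono fun θ => ?_
  rw [← lintegral_const_mul' _ _ (by simp)]
  refine (setLIntegral_mono' measurableSet_Ioo fun ρ hρ => ?_).trans
    (lintegral_mono_set (Ioo_subset_Ioo_right (by linarith [Real.pi_gt_three])))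
  rw [← mul_assoc, ← ENNReal.ofReal_ofNat, ← ENNReal.ofReal_mul two_pos.le]
  gcongr
  exact le_two_mul_sin hρ.1.le hρ.2.le

theorem exists_enorm_rpow_le_lintegral_toSphere (hE : finrank ℝ E = 3) {p : ℝ} (hp : 2 < p) :
    ∃ C : ℝ≥0, ∀ (f : E → F) (g : E → ℝ), ContDiff ℝ 1 f → Measurable g →
      (∀ y w, inner ℝ y w = 0 → ‖w‖ = ‖y‖ → ‖fderiv ℝ f y w‖ ≤ g y) →
      ∀ (r : ℝ) (e : E), ‖e‖ = 1 →
        ‖f (r • e)‖ₑ ^ p ≤ C * ∫⁻ ω : sphere (0 : E) 1,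
          (‖f (r • (ω : E))‖ₑ ^ p + ‖g (r • (ω : E))‖ₑ ^ p) ∂(volume : Measure E).toSphere := by
  obtain ⟨C, hC⟩ := exists_enorm_rpow_le_lintegral_meridian (E := E) (F := F) hp
  refine ⟨C * 2, fun f g hf hg htan r e he => ?_⟩
  obtain ⟨b, rfl⟩ := exists_orthonormalBasis_zero_eq hE he
  set h : E → ℝ≥0∞ := fun ω => ‖f (r • ω)‖ₑ ^ p + ‖g (r • ω)‖ₑ ^ p
  have hh : Measurable h := by
    have hfr : Continuous fun ω : E => f (r • ω) := by fun_prop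
    exact (hfr.enorm.measurable.pow_const _).add (by fun_prop)
  calc ‖f (r • b 0)‖ₑ ^ p
      ≤ ∫⁻ _ in Ioo (-π) π, ‖f (r • b 0)‖ₑ ^ p := by
        rw [setLIntegral_const, Real.volume_Ioo]
        refine le_mul_of_one_le_right' (ENNReal.one_le_ofReal.2 ?_)
        linarith [Real.pi_gt_three]
    _ ≤ ∫⁻ θ in Ioo (-π) π,
          C * ∫⁻ ρ in Ioo (0 : ℝ) 1, ENNReal.ofReal ρ * h (sphericalPoint b ρ θ) :=
        lintegral_mono fun θ => hC f g hf htan b r θ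
    _ ≤ C * (2 * ∫⁻ ω : sphere (0 : E) 1, h ω ∂(volume : Measure E).toSphere) := by
        rw [lintegral_const_mul' _ _ ENNReal.coe_ne_top]
        gcongr
        exact lintegral_lintegral_Ioo_zero_one_le b hh
    _ = _ := by push_cast; ring

theorem exists_enorm_le_eLpNorm_toSphere (hE : finrank ℝ E = 3) {p : ℝ≥0∞} (hp : 2 < p)
    (hp' : p ≠ ∞) :
    ∃ C : ℝ≥0, ∀ (f : E → F) (g : E → ℝ), ContDiff ℝ 1 f → Measurable g →
      (∀ y w, inner ℝ y w = 0 → ‖w‖ = ‖y‖ → ‖fderiv ℝ f y w‖ ≤ g y) →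
      ∀ (r : ℝ) (e : E), ‖e‖ = 1 →
        ‖f (r • e)‖ₑ ≤ C *
          (eLpNorm (fun ω : sphere (0 : E) 1 => f (r • (ω : E))) p (volume : Measure E).toSphere +
            eLpNorm (fun ω : sphere (0 : E) 1 => g (r • (ω : E))) p
              (volume : Measure E).toSphere) := by
  have hp2 : 2 < p.toReal := by simpa using (ENNReal.toReal_lt_toReal (by simp) hp').2 hp
  have hp0 : 0 < p.toReal := by linarith
  obtain ⟨C, hC⟩ := exists_enorm_rpow_le_lintegral_toSphere (F := F) hE hp2
  refine ⟨C ^ (1 / p.toReal), fun f g hf hg htan r e he => ?_⟩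
  have hp00 : p ≠ 0 := (two_pos.trans hp).ne'
  have hfr : Continuous fun ω : sphere (0 : E) 1 => f (r • (ω : E)) := by fun_prop
  rw [← ENNReal.rpow_le_rpow_iff hp0, ENNReal.mul_rpow_of_nonneg _ _ hp0.le,
    ENNReal.coe_rpow_of_nonneg _ (by positivity), ← ENNReal.rpow_mul, one_div_mul_cancel hp0.ne',
    ENNReal.rpow_one]
  refine (hC f g hf hg htan r e he).trans ?_
  gcongr
  refine le_trans (le_of_eq ?_) (ENNReal.add_rpow_le_rpow_add _ _ (by linarith))
  rw [eLpNorm_eq_lintegral_rpow_enorm_toReal hp00 hp',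
    eLpNorm_eq_lintegral_rpow_enorm_toReal hp00 hp', ← ENNReal.rpow_mul, ← ENNReal.rpow_mul,
    one_div_mul_cancel hp0.ne', ENNReal.rpow_one, ENNReal.rpow_one,
    lintegral_add_left (hfr.enorm.measurable.pow_const _)]

end Morrey

section AngularMomentum

open Matrix

variable {f : E3 → ℝ}

theorem fderiv_apply_eq_dotProduct_pd (f : E3 → ℝ) (y w : E3) :
    fderiv ℝ f y w = w.ofLp ⬝ᵥ fun l => pd l f y := by
  have hw : w = ∑ l, w l • EuclideanSpace.single l (1 : ℝ) := by
    simpa using ((EuclideanSpace.basisFun (Fin 3) ℝ).sum_repr w).symm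
  conv_lhs => rw [hw]
  simp [pd, dotProduct]

theorem angOp_eq_crossProduct (f : E3 → ℝ) (y : E3) :
    (fun i => angOp i f y) = y.ofLp ⨯₃ fun l => pd l f y := by
  funext i
  fin_cases i <;> simp [cross_apply, angOp]

theorem abs_fderiv_tangent_le_sum_abs_angOp (f : E3 → ℝ) {y w : E3} (horth : inner ℝ y w = 0)
    (hnorm : ‖w‖ = ‖y‖) : |fderiv ℝ f y w| ≤ ∑ i, |angOp i f y| := by
  have hinner : ∀ v w : E3, v.ofLp ⬝ᵥ w.ofLp = inner ℝ v w := fun v w => by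
    simp [EuclideanSpace.inner_eq_star_dotProduct, dotProduct_comm]
  rcases eq_or_ne y 0 with rfl | hy
  · have hw : w = 0 := by simpa using hnorm
    simpa [hw] using Finset.sum_nonneg fun i _ => abs_nonneg (angOp i f 0)
  set n := y.ofLp ⨯₃ w.ofLp
  have hn : ∀ i, |n i| ≤ ‖y‖ ^ 2 := by
    intro i
    have hlagrange : n ⬝ᵥ n = (‖y‖ ^ 2) ^ 2 := by
      rw [cross_dot_cross, hinner, hinner, hinner, horth, zero_mul, sub_zero,
        real_inner_self_eq_norm_sq, real_inner_self_eq_norm_sq, hnorm, sq (‖y‖ ^ 2)]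
    refine abs_le_of_sq_le_sq (hlagrange ▸ ?_) (sq_nonneg _)
    rw [sq]
    exact Finset.single_le_sum (f := fun i => n i * n i) (fun i _ => mul_self_nonneg _)
      (Finset.mem_univ i)
  refine le_of_mul_le_mul_left ?_ (by positivity : 0 < ‖y‖ ^ 2)
  calc ‖y‖ ^ 2 * |fderiv ℝ f y w| = |n ⬝ᵥ fun i => angOp i f y| := by
        rw [angOp_eq_crossProduct, cross_dot_cross, ← fderiv_apply_eq_dotProduct_pd,
          dotProduct_comm w.ofLp, hinner, hinner, horth, real_inner_self_eq_norm_sq]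
        simp [abs_mul]
    _ ≤ ∑ i, |n i| * |angOp i f y| := by
        simp_rw [← abs_mul]
        exact Finset.abs_sum_le_sum_abs _ _
    _ ≤ ‖y‖ ^ 2 * ∑ i, |angOp i f y| := by
        rw [Finset.mul_sum]
        gcongr with i
        exact hn i

theorem contDiff_angOp (hf : ContDiff ℝ 2 f) (i : Fin 3) : ContDiff ℝ 1 (angOp i f) := by
  have hpd : ∀ l, ContDiff ℝ 1 (pd l f) := fun l =>
    (hf.fderiv_right (by norm_num)).clm_apply contDiff_const
  unfold angOp
  fun_prop

theorem hasCompactSupport_angOp (hc : HasCompactSupport f) (i : Fin 3) :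
    HasCompactSupport (angOp i f) :=
  (hc.fderiv_apply (𝕜 := ℝ) _).mul_left.sub (hc.fderiv_apply (𝕜 := ℝ) _).mul_left

theorem exists_sqrt_mul_enorm_le_eLpNorm_fderiv_angOp :
    ∃ C : ℝ≥0, ∀ f : E3 → ℝ, ContDiff ℝ 2 f → HasCompactSupport f → ∀ x : E3,
      ENNReal.ofReal ‖x‖ ^ (1 / 2 : ℝ) * ‖f x‖ₑ ≤
        C * (eLpNorm (fderiv ℝ f) 2 + ∑ i, eLpNorm (fderiv ℝ (angOp i f)) 2) := by
  have hE : finrank ℝ E3 = 3 := finrank_euclideanSpace_fin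
  obtain ⟨C, hmorrey⟩ := exists_enorm_le_eLpNorm_toSphere (F := ℝ) hE (p := 4) (by norm_num)
    (by norm_num)
  obtain ⟨D, htrace⟩ := exists_sqrt_mul_eLpNorm_toSphere_four_le (volume : Measure E3) hE
  refine ⟨C * D, fun f hf hc x => ?_⟩
  rcases eq_or_ne x 0 with rfl | hx
  · simp
  set r := ‖x‖
  have hr : 0 < r := norm_pos_iff.2 hx
  set S : (E3 → ℝ) → ℝ≥0∞ := fun v =>
    eLpNorm (fun ω : sphere (0 : E3) 1 => v (r • (ω : E3))) 4 (volume : Measure E3).toSphere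
  have hf1 : ContDiff ℝ 1 f := hf.of_le one_le_two
  have hΩ := fun i => contDiff_angOp hf i
  have htangent : S (fun y => ∑ i, |angOp i f y|) ≤ ∑ i, S (angOp i f) :=
    eLpNorm_sum_norm_le (s := .univ)
      (f := fun i (ω : sphere (0 : E3) 1) => angOp i f (r • (ω : E3))) (by norm_num) fun i _ =>
      ((hΩ i).continuous.comp (by fun_prop)).aestronglyMeasurable
  calc ENNReal.ofReal r ^ (1 / 2 : ℝ) * ‖f x‖ₑ
      = ENNReal.ofReal r ^ (1 / 2 : ℝ) * ‖f (r • (r⁻¹ • x))‖ₑ := by rw [smul_inv_smul₀ hr.ne']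
    _ ≤ ENNReal.ofReal r ^ (1 / 2 : ℝ) * (C * (S f + S fun y => ∑ i, |angOp i f y|)) := by
        gcongr
        refine hmorrey f _ hf1 ?_ (fun y w => abs_fderiv_tangent_le_sum_abs_angOp f) r _ ?_
        · have := fun i => (hΩ i).continuous
          fun_prop
        · simp [norm_smul, r, hx]
    _ ≤ ENNReal.ofReal r ^ (1 / 2 : ℝ) * (C * (S f + ∑ i, S (angOp i f))) := by gcongr
    _ = C * (ENNReal.ofReal r ^ (1 / 2 : ℝ) * S f
          + ∑ i, ENNReal.ofReal r ^ (1 / 2 : ℝ) * S (angOp i f)) := by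
        rw [← Finset.mul_sum]
        ring
    _ ≤ C * (D * eLpNorm (fderiv ℝ f) 2 + ∑ i, D * eLpNorm (fderiv ℝ (angOp i f)) 2) := by
        gcongr C * ?_
        refine add_le_add ?_ (Finset.sum_le_sum fun i _ => ?_)
        · exact htrace f hf1 hc r hr.le
        · exact htrace _ (hΩ i) (hasCompactSupport_angOp hc i) r hr.le
    _ = _ := by
        rw [← Finset.mul_sum]
        push_cast
        ring

end AngularMomentum

section VectorField

/-- The `L²` norm of the gradient of a vector field. -/
def gradL2 (u : VF3) : ℝ := (∫ y, ∑ l, ∑ j, (pd l (fun z => u z j) y) ^ 2) ^ ((1 : ℝ) / 2)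

theorem norm_fderiv_sq_le_sum_pd_sq (f : E3 → ℝ) (y : E3) :
    ‖fderiv ℝ f y‖ ^ 2 ≤ ∑ l, pd l f y ^ 2 := by
  have hsum : 0 ≤ ∑ l, pd l f y ^ 2 := Finset.sum_nonneg fun _ _ => sq_nonneg _
  rw [← Real.le_sqrt (norm_nonneg _) hsum]
  refine ContinuousLinearMap.opNorm_le_bound _ (Real.sqrt_nonneg _) fun w => ?_
  rw [fderiv_apply_eq_dotProduct_pd]
  refine abs_le_of_sq_le_sq ?_ (by positivity)
  rw [mul_pow, Real.sq_sqrt hsum, EuclideanSpace.real_norm_sq_eq, mul_comm]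
  exact Finset.sum_mul_sq_le_sq_mul_sq _ _ _

theorem gradL2_nonneg (u : VF3) : 0 ≤ gradL2 u :=
  Real.rpow_nonneg (integral_nonneg fun _ => by positivity) _

variable {u : VF3}

theorem eLpNorm_fderiv_apply_le_gradL2 (hu : ContDiff ℝ 1 u) (hc : HasCompactSupport u)
    (j : Fin 3) : eLpNorm (fderiv ℝ fun z => u z j) 2 ≤ ENNReal.ofReal (gradL2 u) := by
  have hcont : ∀ l j, Continuous (pd l fun z => u z j) := fun l j =>
    ((contDiff_pi.1 hu j).continuous_fderiv one_ne_zero).clm_apply continuous_const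
  have hsupp : ∀ l j, HasCompactSupport fun y => pd l (fun z => u z j) y ^ 2 := fun l j =>
    ((hc.comp_left (g := fun v : Fin 3 → ℝ => v j) rfl).fderiv_apply (𝕜 := ℝ) _).comp_left
      (g := (· ^ 2)) (by simp)
  have hint : Integrable fun y => ∑ l, ∑ j, (pd l (fun z => u z j) y) ^ 2 :=
    integrable_finsetSum _ fun l _ => integrable_finsetSum _ fun j _ =>
      ((hcont l j).pow 2).integrable_of_hasCompactSupport (hsupp l j)
  have hnonneg : ∀ y, 0 ≤ ∑ l, ∑ j, (pd l (fun z => u z j) y) ^ 2 := fun y => by positivity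
  rw [gradL2, ← ENNReal.ofReal_rpow_of_nonneg (integral_nonneg hnonneg) (by norm_num),
    ofReal_integral_eq_lintegral_ofReal hint (.of_forall hnonneg),
    eLpNorm_eq_lintegral_rpow_enorm_toReal two_ne_zero ENNReal.ofNat_ne_top, ENNReal.toReal_ofNat]
  gcongr with y
  rw [← ofReal_norm, ENNReal.ofReal_rpow_of_nonneg (norm_nonneg _) two_pos.le, Real.rpow_two]
  gcongr
  refine (norm_fderiv_sq_le_sum_pd_sq _ y).trans (Finset.sum_le_sum fun l _ => ?_)
  exact Finset.single_le_sum (f := fun j => pd l (fun z => u z j) y ^ 2)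
    (fun _ _ => sq_nonneg _) (Finset.mem_univ j)

theorem contDiff_omtV (hu : ContDiff ℝ 2 u) (i : Fin 3) : ContDiff ℝ 1 (omtV i u) := by
  refine contDiff_pi.2 fun j => ?_
  have hcomp : ∀ k, ContDiff ℝ 1 fun z => u z k := contDiff_pi.1 (hu.of_le one_le_two)
  have hΩ := contDiff_angOp (contDiff_pi.1 hu j) i
  exact hΩ.add (ContDiff.sum fun k _ => contDiff_const.mul (hcomp k))

theorem hasCompactSupport_omtV (hc : HasCompactSupport u) (i : Fin 3) :
    HasCompactSupport (omtV i u) := by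
  refine hc.mono' fun x => not_imp_not.1 fun hx => ?_
  have hpd : ∀ l j, pd l (fun z => u z j) x = 0 := fun l j => by
    have hxj : x ∉ tsupport fun z => u z j := fun hmem =>
      hx (tsupport_comp_subset (g := fun v : Fin 3 → ℝ => v j) rfl u hmem)
    rw [pd, fderiv_of_notMem_tsupport ℝ hxj, _root_.zero_apply]
  rw [Function.mem_support, not_not]
  ext j
  simp [omtV, angOp, hpd, image_eq_zero_of_notMem_tsupport hx]

theorem fderiv_angOp_eq (hu : ContDiff ℝ 2 u) (i j : Fin 3) :
    fderiv ℝ (angOp i fun z => u z j) =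
      fderiv ℝ (fun z => omtV i u z j) - ∑ k, Vmat i j k • fderiv ℝ fun z => u z k := by
  funext y
  have hcomp : ∀ k, HasFDerivAt (fun z => u z k) (fderiv ℝ (fun z => u z k) y) y := fun k =>
    ((contDiff_pi.1 hu k).differentiable two_ne_zero y).hasFDerivAt
  have hΩ := ((contDiff_angOp (contDiff_pi.1 hu j) i).differentiable one_ne_zero y).hasFDerivAt
  have homt : HasFDerivAt (fun z => omtV i u z j) _ y :=
    hΩ.add (HasFDerivAt.fun_sum fun k _ => (hcomp k).const_mul (Vmat i j k))
  simp [homt.fderiv]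

theorem enorm_Vmat_le_one (i j k : Fin 3) : ‖Vmat i j k‖ₑ ≤ 1 := by
  unfold Vmat
  split_ifs <;> simp

theorem eLpNorm_fderiv_angOp_le (hu : ContDiff ℝ 2 u) (hc : HasCompactSupport u) (i j : Fin 3) :
    eLpNorm (fderiv ℝ (angOp i fun z => u z j)) 2 ≤
      ENNReal.ofReal (gradL2 (omtV i u)) + 3 * ENNReal.ofReal (gradL2 u) := by
  have hu1 : ContDiff ℝ 1 u := hu.of_le one_le_two
  have hmeas : ∀ {v : VF3}, ContDiff ℝ 1 v → ∀ k,
      AEStronglyMeasurable (fderiv ℝ fun z => v z k) := fun hv k =>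
    ((contDiff_pi.1 hv k).continuous_fderiv one_ne_zero).aestronglyMeasurable
  have hterm : ∀ k, ‖Vmat i j k‖ₑ * eLpNorm (fderiv ℝ fun z => u z k) 2 ≤
      ENNReal.ofReal (gradL2 u) := fun k =>
    (mul_le_of_le_one_left' (enorm_Vmat_le_one i j k)).trans
      (eLpNorm_fderiv_apply_le_gradL2 hu1 hc k)
  rw [fderiv_angOp_eq hu]
  refine (eLpNorm_sub_sum_smul_le one_le_two _ (hmeas (contDiff_omtV hu i) j)
    (hmeas hu1)).trans (add_le_add ?_ ?_)
  · exact eLpNorm_fderiv_apply_le_gradL2 (contDiff_omtV hu i) (hasCompactSupport_omtV hc i) j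
  · simpa using Finset.sum_le_card_nsmul Finset.univ _ _ fun k _ => hterm k

theorem exists_sqrt_mul_abs_apply_le :
    ∃ C : ℝ≥0, ∀ u : VF3, ContDiff ℝ 2 u → HasCompactSupport u → ∀ (x : E3) (j : Fin 3),
      ‖x‖ ^ ((1 : ℝ) / 2) * |u x j| ≤ C * (gradL2 u + ∑ i, gradL2 (omtV i u)) := by
  obtain ⟨C, hC⟩ := exists_sqrt_mul_enorm_le_eLpNorm_fderiv_angOp
  refine ⟨10 * C, fun u hu hc x j => ?_⟩
  set N := ENNReal.ofReal (gradL2 u)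
  set M := ∑ i, ENNReal.ofReal (gradL2 (omtV i u))
  have hM : M = ENNReal.ofReal (∑ i, gradL2 (omtV i u)) :=
    (ENNReal.ofReal_sum_of_nonneg fun i _ => gradL2_nonneg _).symm
  have hnn : 0 ≤ ∑ i, gradL2 (omtV i u) := Finset.sum_nonneg fun i _ => gradL2_nonneg _
  have hbound : ENNReal.ofReal ‖x‖ ^ (1 / 2 : ℝ) * ‖u x j‖ₑ ≤ 10 * C * (N + M) :=
    calc _ ≤ C * (N + ∑ i, (ENNReal.ofReal (gradL2 (omtV i u)) + 3 * N)) := by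
          refine (hC _ (contDiff_pi.1 hu j)
            (hc.comp_left (g := fun v : Fin 3 → ℝ => v j) rfl) x).trans ?_
          refine mul_le_mul_right (add_le_add ?_ (Finset.sum_le_sum fun i _ => ?_)) _
          · exact eLpNorm_fderiv_apply_le_gradL2 (hu.of_le one_le_two) hc j
          · exact eLpNorm_fderiv_angOp_le hu hc i j
      _ = C * (10 * N + 1 * M) := by
          rw [Finset.sum_add_distrib, Finset.sum_const, Finset.card_univ, Fintype.card_fin,
            nsmul_eq_mul]
          push_cast
          ring
      _ ≤ C * (10 * N + 10 * M) := by gcongr; norm_num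
      _ = _ := by ring
  rw [hM, ← ENNReal.ofReal_add (gradL2_nonneg u) hnn] at hbound
  have := ENNReal.toReal_mono (by finiteness) hbound
  simpa [← ENNReal.toReal_rpow, gradL2_nonneg u, add_nonneg, hnn] using this

theorem weighted_sobolev_half_power_general :
    ∃ C > 0, ∀ u : VF3, ContDiff ℝ 2 u → HasCompactSupport u → ∀ x : E3,
      ‖x‖ ^ ((1 : ℝ) / 2) * Real.sqrt (∑ j, (u x j) ^ 2) ≤
        C * (gradL2 u + ∑ i, gradL2 (omtV i u)) := by
  obtain ⟨C, hC⟩ := exists_sqrt_mul_abs_apply_le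
  refine ⟨3 * C + 1, by positivity, fun u hu hc x => ?_⟩
  have hnonneg : 0 ≤ gradL2 u + ∑ i, gradL2 (omtV i u) :=
    add_nonneg (gradL2_nonneg u) (Finset.sum_nonneg fun i _ => gradL2_nonneg _)
  calc ‖x‖ ^ ((1 : ℝ) / 2) * Real.sqrt (∑ j, (u x j) ^ 2)
      ≤ ∑ j, ‖x‖ ^ ((1 : ℝ) / 2) * |u x j| := by
        rw [← Finset.mul_sum]
        gcongr
        exact sqrt_sum_sq_le_sum_abs _
    _ ≤ ∑ _j : Fin 3, C * (gradL2 u + ∑ i, gradL2 (omtV i u)) :=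
        Finset.sum_le_sum fun j _ => hC u hu hc x j
    _ = 3 * C * (gradL2 u + ∑ i, gradL2 (omtV i u)) := by simp [mul_assoc]
    _ ≤ _ := by gcongr; linarith

end VectorField

/-- there is a constant `C > 0` such that for every `u ∈ C_c^∞(ℝ³;ℝ³)` and every
`x ≠ 0`, `|x|^{1/2} |u(x)| ≤ C (‖∇u‖_{L²} + Σᵢ ‖∇(Ω̃_i u)‖_{L²})`. -/
theorem weighted_sobolev_half_power :
    ∃ C > 0, ∀ u : VF3, ContDiff ℝ (⊤ : ℕ∞) u → HasCompactSupport u →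
      ∀ x : E3, x ≠ 0 →
        ‖x‖ ^ ((1 : ℝ) / 2) * Real.sqrt (∑ j, (u x j) ^ 2) ≤
          C * ((∫ y, ∑ l, ∑ j, (pd l (fun z => u z j) y) ^ 2) ^ ((1 : ℝ) / 2)
            + ∑ i : Fin 3,
              (∫ y, ∑ l, ∑ j, (pd l (fun z => omtV i u z j) y) ^ 2) ^ ((1 : ℝ) / 2)) := by
  obtain ⟨C, hC, hbound⟩ := weighted_sobolev_half_power_general
  exact ⟨C, hC, fun u hu hc x _ => hbound u (contDiff_infty.1 hu 2) hc x⟩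

end
end
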